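/- Let (R, m) be a d-dimensional complete Noetherian local domain of prime characteristic p with absolute integral closure R^+, and let x_1, …, x_d be a system of parameters of R. Then for every 1 ≤ n ≤ d and every y ∈ R, there exists a positive integer N_0 such that (x_1, …, x_n)R^+ :_{R^+} y^∞ = (x_1, …, x_n)R^+ :_{R^+} y^{N_0}. -/

import Mathlib

open IsLocalRing TensorProduct
set_option synthInstance.maxHeartbeats 1000000
set_option maxHeartbeats 1000000

/-- The absolute integral closure `R⁺` of a domain `R`: the integral closure of `R`
in an algebraic closure of its fraction field. -/
noncomputable abbrev RPlus (R : Type) [CommRing R] [IsDomain R] : Type :=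
  ↥(integralClosure R (AlgebraicClosure (FractionRing R)))

/-- A system of parameters of a local ring: `d` elements generating an ideal whose
radical is the maximal ideal, where `d` is the Krull dimension. -/
def IsSOP (R : Type) [CommRing R] [IsLocalRing R] {d : ℕ} (x : Fin d → R) : Prop :=
  ringKrullDim R = d ∧ (Ideal.span (Set.range x)).radical = maximalIdeal R

/-!
By Cohen's structure theorem `R` is finite over a power series ring `A = k⟦X₁, …, X_d⟧` in which
`X_i` corresponds to `x_i`. The heart of the proof is that `R⁺` is flat over `A`. Then for
`P = (X_i : i ∈ s)` the quotient `R⁺ / P R⁺` is integral and torsion-free over the domain `A / P`,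
so `y` is killed there by a polynomial `T ^ n * g` with `g(0) ≠ 0`, which forces
`P R⁺ : y ^ ∞ = P R⁺ : y ^ n`.

Flatness is proved by induction on the dimension for the localizations `C` of `A`, so `C⁺` is
already flat on the punctured spectrum of `C`. If `x i₀ • u` lies in `(x i : i ∈ t) C⁺`, flatness
away from the maximal ideal lets one divide the Frobenius powers `u ^ p ^ e`, modulo
`(x i ^ p ^ e : i ∈ t)`, by `∏ i ∈ t, x i ^ (p ^ e - N i)` with `N` independent of `e` and with
quotients in one finitely generated module. A linear relation among these quotients yields a monic
additive polynomial equation for `u` modulo `(x i ^ p ^ e : i ∈ t)`, and solving such equations in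
`C⁺` gives `u ∈ (x i : i ∈ t) C⁺`. Thus regular sequences of `C` stay regular on `C⁺`, and flatness
of `C⁺` over `C` follows because `C` has finite weak dimension.
-/

universe u

section TorOne

open Function

/-- Vanishing of `Tor₁(X, M)`, expressed without derived functors: `- ⊗ M` keeps `X₁ → L`
injective for every presentation `0 → X₁ → L → X → 0` with `L` flat. -/
def TorOneVanishes (C : Type u) [CommRing C] (X M : Type u) [AddCommGroup X] [Module C X]
    [AddCommGroup M] [Module C M] : Prop :=
  ∀ (X₁ L : Type u) [AddCommGroup X₁] [Module C X₁] [AddCommGroup L] [Module C L]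
    [Module.Flat C L] (f : X₁ →ₗ[C] L) (g : L →ₗ[C] X),
    Injective f → Exact f g → Surjective g → Injective (f.rTensor M)

variable {C : Type u} [CommRing C]
  {X M : Type u} [AddCommGroup X] [Module C X] [AddCommGroup M] [Module C M]

variable (C) in
theorem exists_flat_cover (X : Type u) [AddCommGroup X] [Module C X] :
    ∃ (L : Type u) (_ : AddCommGroup L) (_ : Module C L) (_ : Module.Flat C L) (g : L →ₗ[C] X),
      Surjective g :=
  ⟨X →₀ C, inferInstance, inferInstance, inferInstance, Finsupp.linearCombination C id,
    Finsupp.linearCombination_id_surjective C X⟩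

theorem TorOneVanishes.of_presentation {X₁ L : Type u} [AddCommGroup X₁] [Module C X₁]
    [AddCommGroup L] [Module C L] [Module.Flat C L] (f : X₁ →ₗ[C] L) (g : L →ₗ[C] X)
    (hfg : Exact f g) (hg : Surjective g) (hf : Injective (f.rTensor M)) :
    TorOneVanishes C M X := by
  intro N F _ _ _ _ _ i q hi hiq hq
  rw [← LinearMap.lTensor_inj_iff_rTensor_inj]
  exact lTensor_injective_of_exact_of_exact_of_rTensor_injective hfg hg hiq hq hf
    (Module.Flat.lTensor_preserves_injective_linearMap _ hi)

theorem TorOneVanishes.symm (h : TorOneVanishes C X M) : TorOneVanishes C M X := by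
  obtain ⟨L, _, _, _, g, hg⟩ := exists_flat_cover C X
  exact of_presentation _ g (LinearMap.exact_subtype_ker_map g) hg
    (h _ L _ g Subtype.val_injective (LinearMap.exact_subtype_ker_map g) hg)

theorem TorOneVanishes.of_flat_left [Module.Flat C X] : TorOneVanishes C X M :=
  symm fun _ _ _ _ _ _ _ _ _ hf _ _ => Module.Flat.rTensor_preserves_injective_linearMap _ hf

theorem flat_of_forall_torOneVanishes_quotient
    (h : ∀ I : Ideal C, TorOneVanishes C (C ⧸ I) X) : Module.Flat C X := by
  rw [Module.Flat.iff_rTensor_injective]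
  exact fun I _ => h I I C I.subtype I.mkQ Subtype.val_injective (LinearMap.exact_subtype_mkQ I)
    (Submodule.mkQ_surjective _)

theorem rTensor_injective_of_lTensor_injective {N F Y L : Type u} [AddCommGroup N] [Module C N]
    [AddCommGroup F] [Module C F] [AddCommGroup Y] [Module C Y] [AddCommGroup L] [Module C L]
    {i : N →ₗ[C] F} {f : Y →ₗ[C] L} (hf : Injective (f.lTensor N))
    (hi : Injective (i.rTensor L)) : Injective (i.rTensor Y) := by
  have hcomm : f.lTensor F ∘ₗ i.rTensor Y = i.rTensor L ∘ₗ f.lTensor N := by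
    rw [LinearMap.lTensor_comp_rTensor, LinearMap.rTensor_comp_lTensor]
  refine .of_comp (f := f.lTensor F) ?_
  rw [← LinearMap.coe_comp, hcomm]
  exact hi.comp hf

variable {Y F Z : Type u} [AddCommGroup Y] [Module C Y] [AddCommGroup F] [Module C F]
  [AddCommGroup Z] [Module C Z] {i : Y →ₗ[C] F} {q : F →ₗ[C] Z}

theorem flat_of_exact_of_flat [Module.Flat C F] [Module.Flat C Z] (hi : Injective i)
    (hiq : Exact i q) (hq : Surjective q) : Module.Flat C Y := by
  rw [Module.Flat.iff_rTensor_injective]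
  intro I _
  refine rTensor_injective_of_lTensor_injective (f := i) ?_
    (Module.Flat.rTensor_preserves_injective_linearMap _ I.subtype_injective)
  rw [LinearMap.lTensor_inj_iff_rTensor_inj]
  exact TorOneVanishes.of_flat_left Y F i q hi hiq hq

theorem TorOneVanishes.of_kernels {N E : Type u} [AddCommGroup N] [Module C N] [AddCommGroup E]
    [Module C E] [Module.Flat C E] [Module.Flat C F] {j : N →ₗ[C] E} {r : E →ₗ[C] X}
    (hj : Injective j) (hjr : Exact j r) (hr : Surjective r)
    (hi : Injective i) (hiq : Exact i q) (hq : Surjective q)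
    (h : TorOneVanishes C N Z) : TorOneVanishes C X Y := by
  refine symm (of_presentation j r hjr hr (rTensor_injective_of_lTensor_injective (f := i) ?_
    (Module.Flat.rTensor_preserves_injective_linearMap _ hj)))
  rw [LinearMap.lTensor_inj_iff_rTensor_inj]
  exact h.symm Y F i q hi hiq hq

theorem lTensor_injective_of_exact {N₁ N₂ N₃ : Type u} [AddCommGroup N₁] [Module C N₁]
    [AddCommGroup N₂] [Module C N₂] [AddCommGroup N₃] [Module C N₃] [Module.Flat C F]
    {f : N₁ →ₗ[C] N₂} {g : N₂ →ₗ[C] N₃} (hf : Injective f) (hfg : Exact f g) (hg : Surjective g)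
    (h₁ : Injective (i.lTensor N₁)) (h₃ : Injective (i.lTensor N₃)) :
    Injective (i.lTensor N₂) := by
  rw [injective_iff_map_eq_zero]
  intro a ha
  have hcomm {U V : Type u} [AddCommGroup U] [Module C U] [AddCommGroup V] [Module C V]
      (h : U →ₗ[C] V) (z : U ⊗[C] Y) :
      i.lTensor V (h.rTensor Y z) = h.rTensor F (i.lTensor U z) := by
    rw [← LinearMap.comp_apply, ← LinearMap.comp_apply, LinearMap.lTensor_comp_rTensor,
      LinearMap.rTensor_comp_lTensor]
  have hga : g.rTensor Y a = 0 := h₃ (by rw [hcomm, ha, map_zero, map_zero])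
  obtain ⟨b, rfl⟩ := (rTensor_exact Y hfg hg a).1 hga
  have hb : i.lTensor N₁ b = 0 :=
    Module.Flat.rTensor_preserves_injective_linearMap f hf (by rw [← hcomm, ha, map_zero])
  rw [h₁ (hb.trans (map_zero _).symm), map_zero]

end TorOne

section RegularFamily

open Pointwise

variable {C : Type u} [CommRing C] {ι : Type*}

/-- A permutably regular family: `x i` is a nonzerodivisor on `M / (x j : j ∈ t)M` for all `t ⊆ s`
and `i ∈ s \ t`; equivalently, `(x i)_{i ∈ s}` is a weakly `M`-regular sequence in every order. -/
def IsRegularFamily (M : Type*) [AddCommGroup M] [Module C M] (x : ι → C) (s : Finset ι) : Prop :=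
  ∀ t ⊆ s, ∀ i ∈ s, i ∉ t →
    IsSMulRegular (M ⧸ (Ideal.span (x '' t) • ⊤ : Submodule C M)) (x i)

variable {M : Type*} [AddCommGroup M] [Module C M] {x : ι → C} {s t : Finset ι}

theorem IsRegularFamily.mono (h : IsRegularFamily M x s) (hts : t ⊆ s) : IsRegularFamily M x t :=
  fun _ hr i hi => h _ (hr.trans hts) i (hts hi)

theorem IsRegularFamily.mem_of_smul_mem (h : IsRegularFamily M x s) (hts : t ⊆ s) {i : ι}
    (hi : i ∈ s) (hit : i ∉ t) {m : M}
    (hm : x i • m ∈ (Ideal.span (x '' t) • ⊤ : Submodule C M)) :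
    m ∈ (Ideal.span (x '' t) • ⊤ : Submodule C M) :=
  mem_of_isSMulRegular_quotient_of_smul_mem (h t hts i hi hit) hm

theorem mem_sup_span_singleton_smul_top {I : Ideal C} {r : C} {m : M} :
    m ∈ ((I ⊔ Ideal.span {r}) • ⊤ : Submodule C M) ↔
      ∃ n : M, m - r • n ∈ (I • ⊤ : Submodule C M) := by
  rw [Submodule.sup_smul, Submodule.mem_sup]
  constructor
  · rintro ⟨a, ha, b, hb, rfl⟩
    rw [Submodule.ideal_span_singleton_smul] at hb
    obtain ⟨n, -, rfl⟩ := (Submodule.mem_smul_pointwise_iff_exists _ _ _).1 hb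
    exact ⟨n, by simpa using ha⟩
  · rintro ⟨n, hn⟩
    exact ⟨_, hn, r • n, Submodule.smul_mem_smul (Ideal.mem_span_singleton_self r) trivial,
      sub_add_cancel _ _⟩

theorem span_image_insert [DecidableEq ι] (x : ι → C) (t : Finset ι) (i : ι) :
    Ideal.span (x '' ↑(insert i t)) = Ideal.span (x '' t) ⊔ Ideal.span {x i} := by
  rw [Finset.coe_insert, Set.image_insert_eq, Ideal.span_insert, sup_comm]

theorem mem_span_image_smul_top_iff {m : M} :
    m ∈ (Ideal.span (x '' t) • ⊤ : Submodule C M) ↔ ∃ b : ι → M, ∑ i ∈ t, x i • b i = m := by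
  classical
  constructor
  · intro hm
    induction t using Finset.induction_on generalizing m with
    | empty => exact ⟨0, by simpa [eq_comm] using hm⟩
    | insert i t hit ih =>
      rw [span_image_insert, mem_sup_span_singleton_smul_top] at hm
      obtain ⟨n, hn⟩ := hm
      obtain ⟨b, hb⟩ := ih hn
      refine ⟨Function.update b i n, ?_⟩
      rw [Finset.sum_insert hit, Function.update_self, ← add_sub_cancel (x i • n) m, ← hb]
      exact congrArg _ (Finset.sum_congr rfl fun j hj => by
        rw [Function.update_of_ne (ne_of_mem_of_not_mem hj hit)])
  · rintro ⟨b, rfl⟩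
    exact sum_mem fun i hi =>
      Submodule.smul_mem_smul (Ideal.subset_span ⟨i, hi, rfl⟩) trivial

theorem IsRegularFamily.isSMulRegular_quotient (h : IsRegularFamily C x s) (hts : t ⊆ s) {i : ι}
    (hi : i ∈ s) (hit : i ∉ t) : IsSMulRegular (C ⧸ Ideal.span (x '' t)) (x i) := by
  simpa only [isSMulRegular_quotient_iff_mem_of_smul_mem, smul_eq_mul, Ideal.mul_top] using
    h t hts i hi hit

theorem isSMulRegular_quotient_smul_top_of_flat [Module.Flat C M] {I : Ideal C} {r : C}
    (h : IsSMulRegular (C ⧸ I) r) : IsSMulRegular (M ⧸ (I • ⊤ : Submodule C M)) r :=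
  ((TensorProduct.quotTensorEquivQuotSMul M I).isSMulRegular_congr r).1 (h.rTensor M)

theorem IsRegularFamily.of_flat (h : IsRegularFamily C x s) [Module.Flat C M] :
    IsRegularFamily M x s :=
  fun _ ht _ hi hit => isSMulRegular_quotient_smul_top_of_flat (h.isSMulRegular_quotient ht hi hit)

variable {Y F Z : Type*} [AddCommGroup Y] [Module C Y] [AddCommGroup F] [Module C F]
  [AddCommGroup Z] [Module C Z] {i : Y →ₗ[C] F} {q : F →ₗ[C] Z}

theorem IsRegularFamily.mem_smul_top_of_map_mem (h : IsRegularFamily Z x s)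
    (hi : Function.Injective i) (hiq : Function.Exact i q) (hq : Function.Surjective q) {y : Y}
    (hy : i y ∈ (Ideal.span (x '' s) • ⊤ : Submodule C F)) :
    y ∈ (Ideal.span (x '' s) • ⊤ : Submodule C Y) := by
  classical
  induction s using Finset.induction_on generalizing y with
  | empty =>
    simp only [Finset.coe_empty, Set.image_empty, Ideal.span_empty, Submodule.bot_smul,
      Submodule.mem_bot] at hy ⊢
    exact hi (hy.trans (map_zero i).symm)
  | insert j t hjt ih =>
    rw [span_image_insert, mem_sup_span_singleton_smul_top] at hy ⊢
    obtain ⟨f, hf⟩ := hy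
    have hqf : q f ∈ (Ideal.span (x '' t) • ⊤ : Submodule C Z) := by
      refine h.mem_of_smul_mem (Finset.subset_insert j t) (Finset.mem_insert_self j t) hjt ?_
      have hqf := Submodule.smul_top_le_comap_smul_top _ q hf
      rwa [Submodule.mem_comap, map_sub, hiq.apply_apply_eq_zero, zero_sub, map_smul,
        neg_mem_iff] at hqf
    obtain ⟨g, hg, hgf⟩ : ∃ g ∈ (Ideal.span (x '' t) • ⊤ : Submodule C F), q g = q f := by
      rwa [← Submodule.mem_map, Submodule.map_smul'', Submodule.map_top,
        LinearMap.range_eq_top.2 hq]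
    obtain ⟨y', hy'⟩ := (hiq (f - g)).1 (by rw [map_sub, hgf, sub_self])
    refine ⟨y', ih (h.mono (Finset.subset_insert j t)) ?_⟩
    rw [map_sub, map_smul, hy', smul_sub, ← sub_add]
    exact add_mem hf (Submodule.smul_mem _ _ hg)

theorem IsRegularFamily.of_exact (hF : IsRegularFamily F x s)
    (hZ : ∀ t ⊂ s, IsRegularFamily Z x t) (hi : Function.Injective i) (hiq : Function.Exact i q)
    (hq : Function.Surjective q) : IsRegularFamily Y x s := by
  intro t ht j hj hjt
  rw [isSMulRegular_quotient_iff_mem_of_smul_mem]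
  intro y hy
  refine (hZ t ⟨ht, fun h => hjt (h hj)⟩).mem_smul_top_of_map_mem hi hiq hq ?_
  refine hF.mem_of_smul_mem ht hj hjt ?_
  rw [← map_smul]
  exact Submodule.smul_top_le_comap_smul_top _ i hy

theorem one_tmul_quotient_eq_zero_iff {I : Ideal C} {m : M} :
    (1 ⊗ₜ m : (C ⧸ I) ⊗[C] M) = 0 ↔ m ∈ (I • ⊤ : Submodule C M) := by
  rw [← (TensorProduct.quotTensorEquivQuotSMul M I).map_eq_zero_iff,
    TensorProduct.quotTensorEquivQuotSMul_mk_one_tmul, Submodule.Quotient.mk_eq_zero]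

theorem lTensor_quotient_injective {I : Ideal C}
    (h : ∀ y, i y ∈ (I • ⊤ : Submodule C F) → y ∈ (I • ⊤ : Submodule C Y)) :
    Function.Injective (i.lTensor (C ⧸ I)) := by
  rw [injective_iff_map_eq_zero]
  intro a ha
  obtain ⟨y, rfl⟩ : ∃ y : Y, a = 1 ⊗ₜ y := by
    obtain ⟨y, hy⟩ := Submodule.mkQ_surjective _ (TensorProduct.quotTensorEquivQuotSMul Y I a)
    refine ⟨y, (TensorProduct.quotTensorEquivQuotSMul Y I).injective ?_⟩
    rw [TensorProduct.quotTensorEquivQuotSMul_mk_one_tmul, ← hy, Submodule.mkQ_apply]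
  rw [LinearMap.lTensor_tmul, one_tmul_quotient_eq_zero_iff] at ha
  exact one_tmul_quotient_eq_zero_iff.2 (h y ha)

end RegularFamily

section Syzygy

open Function

/-- `X` is a `k`-th syzygy: it occurs as the leftmost term of an exact sequence
`0 → X → L₁ → ⋯ → L_k` with flat `L_j` (every module being a `0`-th syzygy). -/
def IsSyzygy (C : Type u) [CommRing C] : ℕ → ∀ (X : Type u) [AddCommGroup X] [Module C X], Prop
  | 0, _, _, _ => True
  | k + 1, X, _, _ => ∃ (L : Type u) (_ : AddCommGroup L) (_ : Module C L) (Y : Type u)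
      (_ : AddCommGroup Y) (_ : Module C Y) (f : X →ₗ[C] L) (g : L →ₗ[C] Y),
      Module.Flat C L ∧ Injective f ∧ Exact f g ∧ Surjective g ∧ IsSyzygy C k Y

/-- The weak global dimension of `C` is at most `D`: every `D`-th syzygy is flat. -/
def WeakDimLE (C : Type u) [CommRing C] (D : ℕ) : Prop :=
  ∀ (X : Type u) [AddCommGroup X] [Module C X], IsSyzygy C D X → Module.Flat C X

variable {C : Type u} [CommRing C] {X L : Type u} [AddCommGroup X] [Module C X]
  [AddCommGroup L] [Module C L] {k : ℕ}

theorem IsSyzygy.ker [Module.Flat C L] (hX : IsSyzygy C k X) {g : L →ₗ[C] X}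
    (hg : Surjective g) : IsSyzygy C (k + 1) (LinearMap.ker g) :=
  ⟨L, _, _, X, _, _, (LinearMap.ker g).subtype, g, inferInstance, Subtype.val_injective,
    LinearMap.exact_subtype_ker_map g, hg, hX⟩

theorem IsSyzygy.isRegularFamily {ι : Type*} {x : ι → C} {s : Finset ι}
    (hx : IsRegularFamily C x s) (hX : IsSyzygy C k X) (hk : s.card ≤ k) :
    IsRegularFamily X x s := by
  induction k generalizing X s with
  | zero =>
    obtain rfl := Finset.card_eq_zero.1 (Nat.le_zero.1 hk)
    exact fun _ _ i hi => absurd hi (Finset.notMem_empty i)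
  | succ k ih =>
    obtain ⟨L, _, _, Y, _, _, f, g, _, hf, hfg, hg, hY⟩ := hX
    refine hx.of_flat.of_exact (fun t hts => ?_) hf hfg hg
    exact ih (hx.mono hts.subset) hY (Nat.lt_succ_iff.1 ((Finset.card_lt_card hts).trans_le hk))

variable [IsNoetherianRing C]

theorem torOneVanishes_of_isSyzygy {D : ℕ}
    (hflat : ∀ (N : Type u) [AddCommGroup N] [Module C N], Module.Finite C N → IsSyzygy C D N →
      Module.Flat C N) {j : ℕ} {N : Type u} [AddCommGroup N] [Module C N] [Module.Finite C N]
    (hN : IsSyzygy C j N) (hX : IsSyzygy C k X) (hD : j + k = D) : TorOneVanishes C N X := by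
  induction k generalizing j N X with
  | zero =>
    have := hflat N ‹_› (hD ▸ hN)
    exact .of_flat_left
  | succ k ih =>
    obtain ⟨L, _, _, Y, _, _, f, g, _, hf, hfg, hg, hY⟩ := hX
    obtain ⟨n, q, hq⟩ := Module.Finite.exists_fin' C N
    exact .of_kernels Subtype.val_injective (LinearMap.exact_subtype_ker_map q) hq hf hfg hg
      (ih (hN.ker hq) hY (by omega))

theorem weakDimLE_of_isRegularFamily [IsLocalRing C] {ι : Type*} [Fintype ι] {x : ι → C}
    (hx : IsRegularFamily C x Finset.univ) (hmax : Ideal.span (Set.range x) = maximalIdeal C) :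
    WeakDimLE C (Fintype.card ι) := by
  have hflat (N : Type u) [AddCommGroup N] [Module C N] (_ : Module.Finite C N)
      (hN : IsSyzygy C (Fintype.card ι) N) : Module.Flat C N := by
    obtain ⟨n, q, hq⟩ := Module.Finite.exists_fin' C N
    have hexact := LinearMap.exact_subtype_ker_map q
    have hres : Injective ((LinearMap.ker q).subtype.lTensor (C ⧸ maximalIdeal C)) := by
      refine lTensor_quotient_injective fun y hy => ?_
      rw [← hmax, ← Set.image_univ, ← Finset.coe_univ] at hy ⊢
      exact (hN.isRegularFamily hx Finset.card_univ.le).mem_smul_top_of_map_mem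
        Subtype.val_injective hexact hq hy
    have := Module.free_of_lTensor_residueField_injective _ q hq hexact hres
    infer_instance
  exact fun X _ _ hX => flat_of_forall_torOneVanishes_quotient fun I =>
    torOneVanishes_of_isSyzygy (j := 0) hflat trivial hX (Nat.zero_add _)

end Syzygy

section RegularFamilyPow

variable {C : Type u} [CommRing C] {ι : Type*} {M : Type*} [AddCommGroup M] [Module C M]
  {x z : ι → C} {s : Finset ι}

theorem IsRegularFamily.of_eqOn (h : IsRegularFamily M x s) (hxz : ∀ i ∈ s, z i = x i) :
    IsRegularFamily M z s := by
  intro t ht i hi hit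
  rw [hxz i hi, Set.image_congr fun j hj => hxz j (ht hj)]
  exact h t ht i hi hit

theorem mem_sup_span_mul_smul_top {I : Ideal C} {a f g : C}
    (hf : ∀ m : M, f • m ∈ (I • ⊤ : Submodule C M) → m ∈ (I • ⊤ : Submodule C M))
    (haf : ∀ m : M, a • m ∈ ((I ⊔ Ideal.span {f}) • ⊤ : Submodule C M) →
      m ∈ ((I ⊔ Ideal.span {f}) • ⊤ : Submodule C M))
    (hag : ∀ m : M, a • m ∈ ((I ⊔ Ideal.span {g}) • ⊤ : Submodule C M) →
      m ∈ ((I ⊔ Ideal.span {g}) • ⊤ : Submodule C M)) {m : M}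
    (hm : a • m ∈ ((I ⊔ Ideal.span {f * g}) • ⊤ : Submodule C M)) :
    m ∈ ((I ⊔ Ideal.span {f * g}) • ⊤ : Submodule C M) := by
  simp only [mem_sup_span_singleton_smul_top] at *
  obtain ⟨l, hl⟩ := hm
  obtain ⟨n, hn⟩ := haf m ⟨g • l, by rwa [smul_smul]⟩
  obtain ⟨k, hk⟩ : ∃ k, n - g • k ∈ (I • ⊤ : Submodule C M) := by
    refine hag n ⟨l, hf _ ?_⟩
    have hdecomp : f • (a • n - g • l) = a • m - (f * g) • l - a • (m - f • n) := by module
    rw [hdecomp]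
    exact sub_mem hl (Submodule.smul_mem _ a hn)
  refine ⟨k, ?_⟩
  have hdecomp : m - (f * g) • k = m - f • n + f • (n - g • k) := by module
  rw [hdecomp]
  exact add_mem hn (Submodule.smul_mem _ f hk)

theorem IsRegularFamily.update_mul [DecidableEq ι] {j : ι} {f g : C}
    (hf : IsRegularFamily M (Function.update x j f) s)
    (hg : IsRegularFamily M (Function.update x j g) s) :
    IsRegularFamily M (Function.update x j (f * g)) s := by
  intro t ht i hi hit
  have himage {a : C} {r : Finset ι} (hjr : j ∉ r) :
      Function.update x j a '' r = x '' r :=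
    Set.image_congr fun l hl => Function.update_of_ne (ne_of_mem_of_not_mem hl hjr) _ _
  by_cases hjt : j ∈ t
  · have hij : i ≠ j := fun h => hit (h ▸ hjt)
    have hspan (a : C) : Ideal.span (Function.update x j a '' t) =
        Ideal.span (x '' t.erase j) ⊔ Ideal.span {a} := by
      rw [← Finset.insert_erase hjt, span_image_insert, himage (Finset.notMem_erase j _),
        Function.update_self, Finset.erase_insert (Finset.notMem_erase j _)]
    have hreg {a : C} (ha : IsRegularFamily M (Function.update x j a) s) := ha t ht i hi hit
    simp only [isSMulRegular_quotient_iff_mem_of_smul_mem, hspan,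
      Function.update_of_ne hij] at hreg ⊢
    refine fun m hm => mem_sup_span_mul_smul_top (fun m hm => ?_) (hreg hf) (hreg hg) hm
    have := hf.mem_of_smul_mem ((t.erase_subset j).trans ht) (ht hjt) (t.notMem_erase j) (m := m)
    simp only [himage (t.notMem_erase j), Function.update_self] at this
    exact this hm
  · rw [himage hjt]
    have hf' := hf t ht i hi hit
    have hg' := hg t ht i hi hit
    rw [himage hjt] at hf' hg'
    obtain rfl | hij := eq_or_ne i j
    · simp only [Function.update_self] at hf' hg' ⊢
      exact hf'.mul hg'
    · simpa only [Function.update_of_ne hij] using hf'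

theorem IsRegularFamily.update_one [DecidableEq ι] (h : IsRegularFamily M x s) (j : ι) :
    IsRegularFamily M (Function.update x j 1) s := by
  intro t ht i hi hit
  obtain rfl | hij := eq_or_ne i j
  · simpa only [Function.update_self] using IsSMulRegular.one _
  rw [Function.update_of_ne hij]
  by_cases hjt : j ∈ t
  · have htop : Ideal.span (Function.update x j 1 '' t) = ⊤ :=
      (Ideal.eq_top_iff_one _).2 (Ideal.subset_span ⟨j, hjt, Function.update_self ..⟩)
    simp only [isSMulRegular_quotient_iff_mem_of_smul_mem, htop, Submodule.top_smul]
    exact fun _ _ => trivial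
  · rw [Set.image_congr fun l hl => Function.update_of_ne (ne_of_mem_of_not_mem hl hjt) _ _]
    exact h t ht i hi hit

theorem IsRegularFamily.update_pow [DecidableEq ι] (h : IsRegularFamily M x s) (j : ι) (n : ℕ) :
    IsRegularFamily M (Function.update x j (x j ^ n)) s := by
  induction n with
  | zero => simpa only [pow_zero] using h.update_one j
  | succ n ih =>
    rw [pow_succ]
    exact ih.update_mul (by rwa [Function.update_eq_self])

theorem IsRegularFamily.pow (h : IsRegularFamily M x s) (N : ι → ℕ) :
    IsRegularFamily M (fun i => x i ^ N i) s := by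
  classical
  suffices hr : ∀ r : Finset ι, IsRegularFamily M (fun i => if i ∈ r then x i ^ N i else x i) s from
    (hr s).of_eqOn fun i hi => (if_pos hi).symm
  intro r
  induction r using Finset.induction_on with
  | empty => simpa using h
  | insert j r hjr ih =>
    refine (ih.update_pow j (N j)).of_eqOn fun i _ => ?_
    obtain rfl | hij := eq_or_ne i j
    · simp [hjr]
    · simp [hij]

end RegularFamilyPow

section MaximalRegularFamily

open RingTheory.Sequence

variable {C : Type u} [CommRing C] [IsLocalRing C]

theorem isRegularFamily_get_of_isWeaklyRegular {M : Type*} [AddCommGroup M] [Module C M]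
    [IsNoetherian C M] {rs : List C} (hrs : IsWeaklyRegular M rs)
    (hmax : ∀ r ∈ rs, r ∈ maximalIdeal C) : IsRegularFamily M rs.get Finset.univ := by
  classical
  intro t _ i _ hit
  set l := t.toList ++ [i] ++ (Finset.univ \ insert i t).toList
  have hperm : (List.finRange rs.length).Perm l := by
    refine (List.perm_ext_iff_of_nodup (List.nodup_finRange _) ?_).2 fun j => ?_
    · grind [Finset.nodup_toList, Finset.mem_toList]
    · grind [Finset.mem_toList]
  have hl := isWeaklyRegular_of_perm_of_subset_maximalIdeal hrs
    (List.map_get_finRange rs ▸ hperm.map rs.get) hmax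
  rw [List.map_append, List.map_append, isWeaklyRegular_append_iff, isWeaklyRegular_append_iff,
    List.map_singleton, isWeaklyRegular_singleton_iff] at hl
  have hspan : Ideal.ofList (t.toList.map rs.get) = Ideal.span (rs.get '' t) :=
    congrArg Ideal.span (by ext; simp)
  exact hspan ▸ hl.1.2

variable [IsNoetherianRing C]

theorem exists_isWeaklyRegular_forall_not_isSMulRegular :
    ∃ rs : List C, IsWeaklyRegular C rs ∧ (∀ r ∈ rs, r ∈ maximalIdeal C) ∧
      ∀ r ∈ maximalIdeal C, ¬ IsSMulRegular (C ⧸ Ideal.ofList rs) r := by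
  obtain ⟨I, ⟨rs, hrs, hmax, rfl⟩, hI⟩ :=
    set_has_maximal_iff_noetherian.2 (inferInstanceAs (IsNoetherian C C))
      {I | ∃ rs : List C, IsWeaklyRegular C rs ∧ (∀ r ∈ rs, r ∈ maximalIdeal C) ∧
        Ideal.ofList rs = I} ⟨_, [], .nil C C, by simp, rfl⟩
  refine ⟨rs, hrs, hmax, fun r hr hreg => ?_⟩
  have hr_mem : r ∈ Ideal.ofList rs := by
    by_contra hr_notMem
    refine hI (Ideal.ofList (rs ++ [r]))
      ⟨_, ?_, by simpa [or_imp, forall_and] using ⟨hmax, hr⟩, rfl⟩ ?_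
    · rw [isWeaklyRegular_append_iff, isWeaklyRegular_singleton_iff]
      refine ⟨hrs, ?_⟩
      simpa only [isSMulRegular_quotient_iff_mem_of_smul_mem, smul_eq_mul, Ideal.mul_top] using hreg
    · rw [Ideal.ofList_append, Ideal.ofList_singleton, left_lt_sup,
        Ideal.span_singleton_le_iff_mem]
      exact hr_notMem
  have hone : (1 : C) ∈ Ideal.ofList rs :=
    mem_of_isSMulRegular_quotient_of_smul_mem hreg (by simpa using hr_mem)
  exact (maximalIdeal C).ne_top_iff_one.1 Ideal.IsPrime.ne_top' (Ideal.span_le.2 hmax hone)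

theorem exists_injective_residueField_of_forall_not_isSMulRegular {M : Type*} [AddCommGroup M]
    [Module C M] [Module.Finite C M] (hM : ∀ r ∈ maximalIdeal C, ¬ IsSMulRegular M r) :
    ∃ f : (C ⧸ maximalIdeal C) →ₗ[C] M, Function.Injective f := by
  have hcover : (maximalIdeal C : Set C) ⊆ ⋃ P ∈ associatedPrimes C M, (P : Set C) := by
    rw [biUnion_associatedPrimes_eq_compl_regular]
    exact hM
  obtain ⟨P, hP, hmP⟩ := (Ideal.subset_union_prime_finite (associatedPrimes.finite C M)
    (f := id) ⊥ ⊥ fun P hP _ _ => hP.1).1 hcover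
  obtain rfl : maximalIdeal C = P := (maximalIdeal.isMaximal C).eq_of_le hP.1.ne_top hmP
  obtain ⟨_, m, hm⟩ := isAssociatedPrime_iff.1 hP
  have hker : maximalIdeal C = LinearMap.ker (LinearMap.toSpanSingleton C M m) := by
    rw [hm]
    ext c
    simp [Submodule.mem_colon_singleton]
  exact ⟨(maximalIdeal C).liftQ _ hker.le, LinearMap.ker_eq_bot.1
    (Submodule.ker_liftQ_eq_bot' _ _ hker)⟩

variable (C) in
theorem exists_isRegularFamily_injective_residueField :
    ∃ (n : ℕ) (x : Fin n → C), (∀ i, x i ∈ maximalIdeal C) ∧ IsRegularFamily C x Finset.univ ∧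
      ∃ f : (C ⧸ maximalIdeal C) →ₗ[C] C ⧸ Ideal.span (Set.range x), Function.Injective f := by
  obtain ⟨rs, hrs, hmax, hmaximal⟩ := exists_isWeaklyRegular_forall_not_isSMulRegular (C := C)
  refine ⟨rs.length, rs.get, fun i => hmax _ (rs.get_mem i),
    isRegularFamily_get_of_isWeaklyRegular hrs hmax, ?_⟩
  have hspan : Ideal.ofList rs = Ideal.span (Set.range rs.get) := by
    rw [Set.range_list_get]
  exact exists_injective_residueField_of_forall_not_isSMulRegular (hspan ▸ hmaximal)

end MaximalRegularFamily

section PuncturedSpectrum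

open Function

/-- `M` is flat at every prime of the local ring `C` other than the closed point. -/
def FlatOnPuncturedSpectrum (C : Type u) [CommRing C] [IsLocalRing C] (M : Type u)
    [AddCommGroup M] [Module C M] : Prop :=
  ∀ (Q : Ideal C) [Q.IsPrime], Q ≠ maximalIdeal C → Module.Flat C (LocalizedModule Q.primeCompl M)

theorem flat_localizedModule {C : Type u} [CommRing C] (S : Submonoid C) (M : Type*)
    [AddCommGroup M] [Module C M] [Module.Flat C M] : Module.Flat C (LocalizedModule S M) :=
  (Module.flat_iff_of_isLocalization (Localization S) S _).1 inferInstance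

variable {C : Type u} [CommRing C]
  {Y F Z : Type u} [AddCommGroup Y] [Module C Y] [AddCommGroup F] [Module C F] [AddCommGroup Z]
  [Module C Z] {i : Y →ₗ[C] F} {q : F →ₗ[C] Z}

theorem exists_smul_eq_zero_of_lTensor_eq_zero [Module.Flat C F] (S : Submonoid C)
    [Module.Flat C (LocalizedModule S Z)] (hi : Injective i) (hiq : Exact i q)
    (hq : Surjective q) {N : Type u} [AddCommGroup N] [Module C N] {τ : N ⊗[C] Y}
    (hτ : i.lTensor N τ = 0) : ∃ s ∈ S, s • τ = 0 := by
  let mk (M : Type u) [AddCommGroup M] [Module C M] := LocalizedModule.mkLinearMap S M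
  have := flat_localizedModule S F
  let iS := IsLocalizedModule.map S (mk Y) (mk F) i
  have hinj : Injective (iS.rTensor N) :=
    TorOneVanishes.of_flat_left _ _ iS (IsLocalizedModule.map S (mk F) (mk Z) q)
      (IsLocalizedModule.map_injective S _ _ i hi) (IsLocalizedModule.map_exact S _ _ _ i q hiq)
      (IsLocalizedModule.map_surjective S _ _ q hq)
  have hcomm : iS.rTensor N ∘ₗ (mk Y).rTensor N = (mk F).rTensor N ∘ₗ i.rTensor N := by
    rw [← LinearMap.rTensor_comp, ← LinearMap.rTensor_comp, IsLocalizedModule.map_comp]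
  have hloc : (mk Y).rTensor N (TensorProduct.comm C N Y τ) = 0 := by
    refine hinj (.trans ?_ (map_zero _).symm)
    rw [← LinearMap.comp_apply, hcomm, LinearMap.comp_apply, LinearMap.rTensor_comm, hτ, map_zero,
      map_zero]
  have : IsLocalizedModule S ((mk Y).rTensor N) := IsLocalizedModule.rTensor C S (mk Y)
  obtain ⟨s, hs⟩ := (IsLocalizedModule.eq_zero_iff S ((mk Y).rTensor N)).1 hloc
  refine ⟨s, s.2, (TensorProduct.comm C N Y).injective ?_⟩
  rw [map_smul, map_zero]
  exact hs

variable [IsLocalRing C]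

theorem exists_pow_mem_of_forall_not_le {J : Ideal C}
    (hJ : ∀ (Q : Ideal C) [Q.IsPrime], Q ≠ maximalIdeal C → ¬ J ≤ Q) {g : C}
    (hg : g ∈ maximalIdeal C) : ∃ n : ℕ, g ^ n ∈ J := by
  change g ∈ J.radical
  rw [Ideal.radical_eq_sInf, Submodule.mem_sInf]
  rintro Q ⟨hJQ, hQ⟩
  by_contra hgQ
  exact hJ Q (fun h => hgQ (h ▸ hg)) hJQ

theorem FlatOnPuncturedSpectrum.of_exact [Module.Flat C F] (hZ : FlatOnPuncturedSpectrum C Z)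
    (hi : Injective i) (hiq : Exact i q) (hq : Surjective q) : FlatOnPuncturedSpectrum C Y := by
  intro Q _ hQ
  have := hZ Q hQ
  have := flat_localizedModule Q.primeCompl F
  let mk (M : Type u) [AddCommGroup M] [Module C M] := LocalizedModule.mkLinearMap Q.primeCompl M
  exact flat_of_exact_of_flat (IsLocalizedModule.map_injective Q.primeCompl (mk Y) (mk F) i hi)
    (IsLocalizedModule.map_exact Q.primeCompl _ _ (mk Z) i q hiq)
    (IsLocalizedModule.map_surjective Q.primeCompl _ _ q hq)

theorem lTensor_quotient_prime_injective [Module.Flat C Y] [Module.Flat C F]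
    (hZ : FlatOnPuncturedSpectrum C Z) (hi : Injective i) (hiq : Exact i q) (hq : Surjective q)
    {P : Ideal C} [P.IsPrime] (hP : P ≠ maximalIdeal C) : Injective (i.lTensor (C ⧸ P)) := by
  obtain ⟨g, hg, hgP⟩ := SetLike.exists_of_lt ((le_maximalIdeal Ideal.IsPrime.ne_top').lt_of_ne hP)
  have hreg : IsSMulRegular ((C ⧸ P) ⊗[C] Y) g := by
    refine IsSMulRegular.rTensor Y ?_
    rw [isSMulRegular_quotient_iff_mem_of_smul_mem]
    exact fun c hc => (Ideal.IsPrime.mem_or_mem ‹_› hc).resolve_left hgP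
  rw [injective_iff_map_eq_zero]
  intro τ hτ
  obtain ⟨n, hn⟩ : ∃ n : ℕ, g ^ n ∈ Ideal.torsionOf C _ τ := by
    refine exists_pow_mem_of_forall_not_le (fun Q _ hQ hle => ?_) hg
    have := hZ Q hQ
    obtain ⟨s, hs, hsτ⟩ := exists_smul_eq_zero_of_lTensor_eq_zero Q.primeCompl hi hiq hq hτ
    exact hs (hle hsτ)
  exact (hreg.pow n).right_eq_zero_of_smul hn

variable [IsNoetherianRing C] {ι : Type*} [Fintype ι] {x : ι → C}

theorem flat_of_flatOnPuncturedSpectrum_of_exact [Module.Flat C Y] [Module.Flat C F]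
    (hZ : FlatOnPuncturedSpectrum C Z) (hx : IsRegularFamily Z x Finset.univ)
    {f : (C ⧸ maximalIdeal C) →ₗ[C] C ⧸ Ideal.span (Set.range x)} (hf : Injective f)
    (hi : Injective i) (hiq : Exact i q) (hq : Surjective q) : Module.Flat C Z := by
  have hres : Injective (i.lTensor (C ⧸ maximalIdeal C)) := by
    refine .of_comp (f := f.rTensor F) ?_
    have hquot : Injective (i.lTensor (C ⧸ Ideal.span (Set.range x))) := by
      rw [← Set.image_univ, ← Finset.coe_univ]
      exact lTensor_quotient_injective fun y => hx.mem_smul_top_of_map_mem hi hiq hq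
    rw [← LinearMap.coe_comp, LinearMap.rTensor_comp_lTensor, ← LinearMap.lTensor_comp_rTensor,
      LinearMap.coe_comp]
    exact hquot.comp (Module.Flat.rTensor_preserves_injective_linearMap f hf)
  have hprime (P : Ideal C) (hP : P.IsPrime) : Injective (i.lTensor (C ⧸ P)) := by
    obtain rfl | hP := eq_or_ne P (maximalIdeal C)
    exacts [hres, lTensor_quotient_prime_injective hZ hi hiq hq hP]
  have hfinite (N : Type u) [AddCommGroup N] [Module C N] (hN : Module.Finite C N) :
      Injective (i.lTensor N) := by
    induction hN using IsNoetherianRing.induction_on_isQuotientEquivQuotientPrime C with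
    | subsingleton N => exact injective_of_subsingleton _
    | quotient N P e =>
      refine .of_comp (f := e.toLinearMap.rTensor F) ?_
      rw [← LinearMap.coe_comp, LinearMap.rTensor_comp_lTensor, ← LinearMap.lTensor_comp_rTensor,
        LinearMap.coe_comp]
      exact (hprime P.1 P.2).comp (Module.Flat.rTensor_preserves_injective_linearMap _ e.injective)
    | exact N₁ N₂ N₃ f g hf hg hfg h₁ h₃ => exact lTensor_injective_of_exact hf hfg hg h₁ h₃
  refine flat_of_forall_torOneVanishes_quotient fun I => .of_presentation i q hiq hq ?_
  rw [← LinearMap.lTensor_inj_iff_rTensor_inj]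
  exact hfinite _ inferInstance

theorem flat_of_flatOnPuncturedSpectrum_of_weakDimLE {D : ℕ} (hD : WeakDimLE C D)
    (hxC : IsRegularFamily C x Finset.univ)
    {f : (C ⧸ maximalIdeal C) →ₗ[C] C ⧸ Ideal.span (Set.range x)} (hf : Injective f)
    (hZ : FlatOnPuncturedSpectrum C Z) (hx : IsRegularFamily Z x Finset.univ) :
    Module.Flat C Z := by
  suffices h : ∀ (e k : ℕ) (Z : Type u) [AddCommGroup Z] [Module C Z], k + e = D →
      IsSyzygy C k Z → FlatOnPuncturedSpectrum C Z → IsRegularFamily Z x Finset.univ →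
      Module.Flat C Z from h D 0 Z (Nat.zero_add D) trivial hZ hx
  intro e
  induction e with
  | zero => exact fun k Z _ _ hk hsyz _ _ => hD Z (hk ▸ hsyz)
  | succ e ih =>
    intro k Z _ _ hk hsyz hZ hx
    obtain ⟨L, _, _, _, g, hg⟩ := exists_flat_cover C Z
    have hexact := LinearMap.exact_subtype_ker_map g
    have := ih (k + 1) (LinearMap.ker g) (by omega) (hsyz.ker hg)
      (hZ.of_exact Subtype.val_injective hexact hg)
      (hxC.of_flat.of_exact (fun t ht => hx.mono ht.subset) Subtype.val_injective hexact hg)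
    exact flat_of_flatOnPuncturedSpectrum_of_exact hZ hx hf Subtype.val_injective hexact hg

end PuncturedSpectrum

section Factorization

open Function

variable {C : Type u} [CommRing C]

theorem mem_range_dualTensorHom_iff {S M : Type*} [AddCommGroup S] [Module C S] [AddCommGroup M]
    [Module C M] {ψ : S →ₗ[C] M} :
    ψ ∈ LinearMap.range (dualTensorHom C S M) ↔
      ∃ (r : ℕ) (α : S →ₗ[C] (Fin r → C)) (β : (Fin r → C) →ₗ[C] M), β ∘ₗ α = ψ := by
  constructor
  · rintro ⟨τ, rfl⟩
    obtain ⟨r, φ, m, rfl⟩ := TensorProduct.exists_sum_tmul_eq τ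
    refine ⟨r, LinearMap.pi φ, Fintype.linearCombination C m, ?_⟩
    ext s
    simp [Fintype.linearCombination_apply]
  · rintro ⟨r, α, β, rfl⟩
    refine ⟨∑ j, (LinearMap.proj j ∘ₗ α) ⊗ₜ β fun l => if j = l then 1 else 0, ?_⟩
    ext s
    simp [LinearMap.pi_apply_eq_sum_univ β (α s)]

theorem exists_mem_smul_mem_range_dualTensorHom [IsNoetherianRing C] (W : Submonoid C)
    {S M : Type*} [AddCommGroup S] [Module C S] [Module.Finite C S] [AddCommGroup M] [Module C M]
    [Module.Flat C (LocalizedModule W M)] (ψ : S →ₗ[C] M) :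
    ∃ s ∈ W, s • ψ ∈ LinearMap.range (dualTensorHom C S M) := by
  let mk := LocalizedModule.mkLinearMap W M
  have := Module.finitePresentation_of_finite C S
  obtain ⟨r, α, β', hβ'⟩ := Module.Flat.exists_factorization_of_finitePresentation (mk ∘ₗ ψ)
  obtain ⟨β, s, hβ⟩ := Module.FinitePresentation.exists_lift_of_isLocalizedModule W mk β'
  obtain ⟨s', hs'⟩ := Module.Finite.exists_smul_of_comp_eq_of_isLocalizedModule W mk (β ∘ₗ α)
    ((s : C) • ψ) (by
      rw [← LinearMap.comp_assoc, hβ, LinearMap.comp_smul, hβ']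
      rfl)
  let e := Finsupp.linearEquivFunOnFinite C C (Fin r)
  refine ⟨s' * s, mul_mem s'.2 s.2, mem_range_dualTensorHom_iff.2
    ⟨r, e ∘ₗ α, ((s' : C) • β) ∘ₗ e.symm, ?_⟩⟩
  rw [mul_smul]
  refine .trans ?_ hs'
  ext z
  simp [Submonoid.smul_def]

theorem exists_pow_smul_mem_range_dualTensorHom [IsLocalRing C] [IsNoetherianRing C] {S : Type*}
    {M : Type u} [AddCommGroup S] [Module C S] [Module.Finite C S] [AddCommGroup M] [Module C M]
    (hM : FlatOnPuncturedSpectrum C M) (ψ : S →ₗ[C] M) {g : C} (hg : g ∈ maximalIdeal C) :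
    ∃ n : ℕ, g ^ n • ψ ∈ LinearMap.range (dualTensorHom C S M) := by
  refine exists_pow_mem_of_forall_not_le (J := (LinearMap.range (dualTensorHom C S M)).comap
    (LinearMap.toSpanSingleton C _ ψ)) (fun Q _ hQ hle => ?_) hg
  have := hM Q hQ
  obtain ⟨s, hs, hψ⟩ := exists_mem_smul_mem_range_dualTensorHom Q.primeCompl ψ
  exact hs (hle hψ)

theorem exists_sub_smul_mem_of_comp_eq_smul {S S' L M : Type*} [AddCommGroup S] [Module C S]
    [AddCommGroup S'] [Module C S'] [AddCommGroup L] [Module C L] [AddCommGroup M] [Module C M]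
    {α : S →ₗ[C] L} {β : L →ₗ[C] S'} {j : S →ₗ[C] S'} {k : S' →ₗ[C] M} {I : Ideal C} {e g h : C}
    (hβα : β ∘ₗ α = g • j)
    (he : IsSMulRegular (L ⧸ ((I ⊔ Ideal.span {g * h}) • ⊤ : Submodule C L)) e)
    (hgh : IsSMulRegular (L ⧸ (I • ⊤ : Submodule C L)) (g * h))
    (hg : IsSMulRegular (M ⧸ (I • ⊤ : Submodule C M)) g) {u : S}
    (hu : e • u ∈ ((I ⊔ Ideal.span {g * h}) • ⊤ : Submodule C S)) :
    ∃ v : S', k (j u) - h • k v ∈ (I • ⊤ : Submodule C M) ∧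
      e • v ∈ ((I ⊔ Ideal.span {g}) • ⊤ : Submodule C S') := by
  have hβα (s : S) : β (α s) = g • j s := LinearMap.congr_fun hβα s
  have hαu := Submodule.smul_top_le_comap_smul_top _ α hu
  rw [Submodule.mem_comap, map_smul] at hαu
  obtain ⟨b, hb⟩ := mem_sup_span_singleton_smul_top.1
    (mem_of_isSMulRegular_quotient_of_smul_mem he hαu)
  obtain ⟨s, hs⟩ := mem_sup_span_singleton_smul_top.1 hu
  refine ⟨β b, mem_of_isSMulRegular_quotient_of_smul_mem hg ?_,
    mem_sup_span_singleton_smul_top.2 ⟨j s, ?_⟩⟩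
  · have hkβ := Submodule.smul_top_le_comap_smul_top _ (k ∘ₗ β) hb
    simpa only [Submodule.mem_comap, LinearMap.comp_apply, map_sub, map_smul, hβα, mul_smul,
      smul_sub] using hkβ
  · have hebs : e • b - α s ∈ (I • ⊤ : Submodule C L) := by
      refine mem_of_isSMulRegular_quotient_of_smul_mem hgh ?_
      have hαs := Submodule.smul_top_le_comap_smul_top _ α hs
      rw [Submodule.mem_comap, map_sub, map_smul, map_smul] at hαs
      convert sub_mem hαs (Submodule.smul_mem _ e hb) using 1
      module
    have hβe := Submodule.smul_top_le_comap_smul_top _ β hebs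
    rwa [Submodule.mem_comap, map_sub, map_smul, hβα] at hβe

end Factorization

section DivisionByPowers

theorem smul_mem_smul_top_of_forall_mul_mem {C M : Type*} [CommRing C] [AddCommGroup M]
    [Module C M] {I J : Ideal C} {a : C} (ha : ∀ c ∈ I, a * c ∈ J) {m : M}
    (hm : m ∈ (I • ⊤ : Submodule C M)) : a • m ∈ (J • ⊤ : Submodule C M) := by
  suffices h : (I • ⊤ : Submodule C M) ≤ (J • ⊤ : Submodule C M).comap (LinearMap.lsmul C M a) from
    h hm
  refine Submodule.smul_le.2 fun c hc m _ => ?_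
  rw [Submodule.mem_comap, LinearMap.lsmul_apply, smul_smul]
  exact Submodule.smul_mem_smul (ha c hc) trivial

variable {C : Type u} [CommRing C] [IsLocalRing C] [IsNoetherianRing C] {M : Type u}
  [AddCommGroup M] [Module C M]

theorem exists_fg_forall_exists_sub_smul_mem (hM : FlatOnPuncturedSpectrum C M)
    {S : Submodule C M} (hS : S.FG) {g : C} (hg : g ∈ maximalIdeal C) :
    ∃ (n : ℕ) (S' : Submodule C M), S'.FG ∧ ∀ (I : Ideal C) (e h : C),
      IsSMulRegular (C ⧸ (I ⊔ Ideal.span {g ^ n * h})) e → IsSMulRegular (C ⧸ I) (g ^ n * h) →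
      IsSMulRegular (M ⧸ (I • ⊤ : Submodule C M)) (g ^ n) →
      ∀ u ∈ S, e • u ∈ (I ⊔ Ideal.span {g ^ n * h}) • S →
        ∃ v ∈ S', u - h • v ∈ (I • ⊤ : Submodule C M) ∧ e • v ∈ (I ⊔ Ideal.span {g ^ n}) • S' := by
  have := Module.Finite.of_fg hS
  obtain ⟨n, hn⟩ := exists_pow_smul_mem_range_dualTensorHom hM S.subtype hg
  obtain ⟨r, α, β, hβα⟩ := mem_range_dualTensorHom_iff.1 hn
  have hS' : (S ⊔ LinearMap.range β).FG :=
    hS.sup (LinearMap.range_eq_map β ▸ Module.Finite.fg_top.map β)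
  refine ⟨n, S ⊔ LinearMap.range β, hS', fun I e h he hgh hg u hu heu => ?_⟩
  have hβ (l) : β l ∈ S ⊔ LinearMap.range β := Submodule.mem_sup_right ⟨l, rfl⟩
  obtain ⟨v, hv, hev⟩ := exists_sub_smul_mem_of_comp_eq_smul
    (β := β.codRestrict (S ⊔ LinearMap.range β) hβ) (j := Submodule.inclusion le_sup_left)
    (k := Submodule.subtype _) (u := ⟨u, hu⟩)
    (LinearMap.ext fun s => Subtype.ext (LinearMap.congr_fun hβα s))
    (isSMulRegular_quotient_smul_top_of_flat he) (isSMulRegular_quotient_smul_top_of_flat hgh) hg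
    ((Submodule.mem_smul_top_iff _ _ _).2 heu)
  exact ⟨v, v.2, hv, (Submodule.mem_smul_top_iff _ _ _).1 hev⟩

variable {ι : Type*} [DecidableEq ι] {x : ι → C} {t J : Finset ι} {i₀ : ι}

theorem prod_pow_sub_mul_mem_span {C : Type*} [CommRing C] (x : ι → C) {N : ι → ℕ} {q : ℕ}
    (hN : ∀ i ∈ J, N i ≤ q) {c : C}
    (hc : c ∈ Ideal.span ((fun i => x i ^ J.piecewise N (fun _ => q) i) '' t)) :
    (∏ i ∈ J, x i ^ (q - N i)) * c ∈ Ideal.span ((fun i => x i ^ q) '' t) := by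
  induction hc using Submodule.span_induction with
  | zero => simp
  | add a b _ _ ha hb => rw [mul_add]; exact add_mem ha hb
  | smul a b _ hb => rw [smul_eq_mul, mul_left_comm]; exact Ideal.mul_mem_left _ _ hb
  | mem c hc =>
    obtain ⟨i, hi, rfl⟩ := hc
    refine Ideal.mem_of_dvd _ ?_ (Ideal.subset_span ⟨i, hi, rfl⟩)
    by_cases hiJ : i ∈ J
    · simp only [Finset.piecewise_eq_of_mem _ _ _ hiJ]
      calc x i ^ q = x i ^ (q - N i) * x i ^ N i := (pow_sub_mul_pow _ (hN i hiJ)).symm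
        _ ∣ (∏ i ∈ J, x i ^ (q - N i)) * x i ^ N i :=
          mul_dvd_mul_right (Finset.dvd_prod_of_mem (fun i => x i ^ (q - N i)) hiJ) _
    · simp only [Finset.piecewise_eq_of_notMem _ _ _ hiJ, dvd_mul_left]

theorem exists_fg_forall_pow_exists_sub_pow_smul_mem (hM : FlatOnPuncturedSpectrum C M)
    (hxC : IsRegularFamily C x (insert i₀ t)) (hxM : IsRegularFamily M x t) (hi₀ : i₀ ∉ t)
    {S : Submodule C M} (hS : S.FG) {j : ι} (hj : j ∈ t) (hxj : x j ∈ maximalIdeal C) :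
    ∃ (n : ℕ) (S' : Submodule C M), S'.FG ∧ ∀ E : ι → ℕ, n ≤ E j → ∀ u ∈ S,
      x i₀ ^ E i₀ • u ∈ Ideal.span ((fun i => x i ^ E i) '' t) • S → ∃ v ∈ S',
        u - x j ^ (E j - n) • v ∈
          (Ideal.span ((fun i => x i ^ E i) '' (t.erase j)) • ⊤ : Submodule C M) ∧
        x i₀ ^ E i₀ • v ∈ Ideal.span ((fun i => x i ^ Function.update E j n i) '' t) • S' := by
  obtain ⟨n, S', hS', hdiv⟩ := exists_fg_forall_exists_sub_smul_mem hM hS hxj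
  refine ⟨n, S', hS', fun E hn u hu heu => ?_⟩
  have hsplit (E : ι → ℕ) : Ideal.span ((fun i => x i ^ E i) '' t) =
      Ideal.span ((fun i => x i ^ E i) '' (t.erase j)) ⊔ Ideal.span {x j ^ E j} := by
    rw [← span_image_insert (fun i => x i ^ E i), Finset.insert_erase hj]
  have herase : (fun i => x i ^ Function.update E j n i) '' (t.erase j) =
      (fun i => x i ^ E i) '' (t.erase j) :=
    Set.image_congr fun i hi => by rw [Function.update_of_ne (Finset.ne_of_mem_erase hi)]
  have hpow : x j ^ n * x j ^ (E j - n) = x j ^ E j := pow_mul_pow_sub _ hn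
  have hsub : t.erase j ⊆ t := Finset.erase_subset j t
  have hreg := (hxM.pow (Function.update E j n)) _ hsub j hj (Finset.notMem_erase j t)
  rw [herase] at hreg
  simp only [Function.update_self] at hreg
  rw [hsplit (Function.update E j n), herase, Function.update_self]
  refine hdiv _ _ _ ?_ ?_ hreg u hu ?_
  · rw [hpow, ← hsplit]
    exact (hxC.pow E).isSMulRegular_quotient (Finset.subset_insert i₀ t)
      (Finset.mem_insert_self i₀ t) hi₀
  · rw [hpow]
    exact (hxC.pow E).isSMulRegular_quotient (hsub.trans (Finset.subset_insert i₀ t))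
      (Finset.mem_insert_of_mem hj) (Finset.notMem_erase j t)
  · rwa [hpow, ← hsplit]

theorem exists_fg_forall_pow_exists_sub_prod_smul_mem (hM : FlatOnPuncturedSpectrum C M)
    (hxm : ∀ i ∈ t, x i ∈ maximalIdeal C) (hxC : IsRegularFamily C x (insert i₀ t))
    (hxM : IsRegularFamily M x t) (hi₀ : i₀ ∉ t) {S : Submodule C M} (hS : S.FG) (hJ : J ⊆ t) :
    ∃ (N : ι → ℕ) (S' : Submodule C M), S'.FG ∧ ∀ q : ℕ, (∀ i ∈ J, N i ≤ q) → ∀ u ∈ S,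
      x i₀ ^ q • u ∈ Ideal.span ((fun i => x i ^ q) '' t) • S → ∃ v ∈ S',
        u - (∏ i ∈ J, x i ^ (q - N i)) • v ∈
          (Ideal.span ((fun i => x i ^ q) '' t) • ⊤ : Submodule C M) ∧
        x i₀ ^ q • v ∈ Ideal.span ((fun i => x i ^ J.piecewise N (fun _ => q) i) '' t) • S' := by
  induction J using Finset.induction_on with
  | empty => exact ⟨0, S, hS, fun q _ u hu hqu => ⟨u, hu, by simp, by simpa using hqu⟩⟩
  | insert j J hjJ ih =>
    rw [Finset.insert_subset_iff] at hJ
    obtain ⟨N, S₁, hS₁, hdivJ⟩ := ih hJ.2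
    obtain ⟨n, S₂, hS₂, hdivj⟩ := exists_fg_forall_pow_exists_sub_pow_smul_mem hM hxC hxM hi₀ hS₁
      hJ.1 (hxm j hJ.1)
    have hN : ∀ i ∈ J, Function.update N j n i = N i :=
      fun i hi => Function.update_of_ne (ne_of_mem_of_not_mem hi hjJ) _ _
    refine ⟨Function.update N j n, S₂, hS₂, fun q hq u hu hqu => ?_⟩
    rw [Finset.forall_mem_insert, Function.update_self] at hq
    have hqJ : ∀ i ∈ J, N i ≤ q := fun i hi => hN i hi ▸ hq.2 i hi
    obtain ⟨v, hv, huv, hqv⟩ := hdivJ q hqJ u hu hqu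
    have hE {i : ι} (hi : i ∉ J) : J.piecewise N (fun _ => q) i = q :=
      Finset.piecewise_eq_of_notMem _ _ _ hi
    obtain ⟨w, hw, hvw, hqw⟩ := hdivj (J.piecewise N fun _ => q) (hq.1.trans_eq (hE hjJ).symm) v hv
      (by rwa [hE fun h => hi₀ (hJ.2 h)])
    rw [hE fun h => hi₀ (hJ.2 h)] at hqw
    refine ⟨w, hw, ?_, ?_⟩
    · have hvw' : (∏ i ∈ J, x i ^ (q - N i)) • (v - x j ^ (q - n) • w) ∈
          (Ideal.span ((fun i => x i ^ q) '' t) • ⊤ : Submodule C M) := by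
        rw [hE hjJ] at hvw
        exact smul_mem_smul_top_of_forall_mul_mem (fun c hc => prod_pow_sub_mul_mem_span x hqJ
          (Ideal.span_mono (Set.image_mono (Finset.erase_subset j t)) hc)) hvw
      rw [Finset.prod_insert hjJ, Function.update_self,
        Finset.prod_congr rfl fun i hi => by rw [hN i hi]]
      convert add_mem huv hvw' using 1
      module
    · rwa [Finset.piecewise_insert, Function.update_self, J.piecewise_congr hN fun _ _ => rfl]

end DivisionByPowers

section AdditivePolynomial

open Polynomial

/-- The additive polynomial `X ^ p ^ (m + n) - ∑ j < n, c j * X ^ p ^ (m + j)`. Evaluated at an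
element of a ring of characteristic `p`, it expresses that a Frobenius power of this element is a
linear combination of lower ones. -/
noncomputable def pPolynomial {A : Type*} [CommRing A] (p m n : ℕ) (c : ℕ → A) : A[X] :=
  X ^ p ^ (m + n) - ∑ j ∈ Finset.range n, C (c j) * X ^ p ^ (m + j)

variable {A L : Type*} [CommRing A] [CommRing L] [Algebra A L] {p : ℕ} (m n : ℕ) (c : ℕ → A)

theorem aeval_pPolynomial (y : L) : aeval y (pPolynomial p m n c) =
    y ^ p ^ (m + n) - ∑ j ∈ Finset.range n, c j • y ^ p ^ (m + j) := by
  simp only [pPolynomial, map_sub, map_sum, map_mul, map_pow, aeval_X, aeval_C, Algebra.smul_def]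

theorem aeval_sub_sum_pPolynomial [Fact p.Prime] [CharP L p] {ι : Type*} (s : Finset ι) (y : L)
    (w : ι → L) : aeval (y - ∑ i ∈ s, w i) (pPolynomial p m n c) =
      aeval y (pPolynomial p m n c) - ∑ i ∈ s, aeval (w i) (pPolynomial p m n c) := by
  simp only [aeval_pPolynomial, sub_pow_char_pow, sum_pow_char_pow, smul_sub,
    Finset.sum_sub_distrib, Finset.smul_sum, Finset.sum_comm (s := s)]
  abel

variable [Fact p.Prime]

theorem prime_pow_le_prime_pow_of_lt {j n : ℕ} (hj : j < n) : p ^ (m + j) ≤ p ^ (m + n) :=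
  Nat.pow_le_pow_right (Fact.out : p.Prime).pos (by lia)

theorem aeval_smul_pPolynomial (a : A) (y : L) :
    aeval (a • y) (pPolynomial p m n fun j => c j * a ^ (p ^ (m + n) - p ^ (m + j))) =
      a ^ p ^ (m + n) • aeval y (pPolynomial p m n c) := by
  simp only [aeval_pPolynomial, _root_.smul_pow, smul_sub, Finset.smul_sum]
  refine congrArg _ (Finset.sum_congr rfl fun j hj => ?_)
  rw [smul_smul, smul_smul, mul_assoc,
    pow_sub_mul_pow _ (prime_pow_le_prime_pow_of_lt m (Finset.mem_range.1 hj)), mul_comm]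

theorem degree_sum_pPolynomial_lt :
    (∑ j ∈ Finset.range n, C (c j) * X ^ p ^ (m + j) : A[X]).degree < (p ^ (m + n) : ℕ) := by
  refine (degree_sum_le _ _).trans_lt ((Finset.sup_lt_iff (WithBot.bot_lt_coe _)).2 fun j hj => ?_)
  refine (degree_C_mul_X_pow_le _ _).trans_lt (Nat.cast_lt.2 ?_)
  have := Finset.mem_range.1 hj
  exact Nat.pow_lt_pow_right (Fact.out : p.Prime).one_lt (by lia)

theorem monic_pPolynomial : (pPolynomial p m n c).Monic :=
  monic_X_pow_sub (degree_sum_pPolynomial_lt m n c)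

theorem natDegree_pPolynomial_ne_zero [Nontrivial A] : (pPolynomial p m n c).natDegree ≠ 0 := by
  have hdeg : (pPolynomial p m n c).degree = (p ^ (m + n) : ℕ) := by
    rw [pPolynomial, degree_sub_eq_left_of_degree_lt] <;> rw [degree_X_pow]
    exact degree_sum_pPolynomial_lt m n c
  rw [natDegree_eq_of_degree_eq_some hdeg]
  exact pow_ne_zero _ (Fact.out : p.Prime).ne_zero

variable {K : Type*} [Field K] [Algebra A K]

theorem isIntegral_of_aeval_pPolynomial [Nontrivial A] {y : L}
    (h : IsIntegral A (aeval y (pPolynomial p m n c))) : IsIntegral A y :=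
  h.of_aeval_monic (monic_pPolynomial m n c) (natDegree_pPolynomial_ne_zero m n c)

theorem exists_aeval_pPolynomial_eq [IsAlgClosed K] (r : K) :
    ∃ y : K, aeval y (pPolynomial p m n c) = r := by
  have := (algebraMap A K).domain_nontrivial
  obtain ⟨y, hy⟩ := IsAlgClosed.eval_surjective
    (p := (pPolynomial p m n c).map (algebraMap A K)) (by
      rw [(monic_pPolynomial m n c).natDegree_map]
      exact natDegree_pPolynomial_ne_zero m n c) r
  exact ⟨y, by rwa [← eval_map_algebraMap]⟩

theorem exists_isIntegral_smul_of_pow_smul_aeval_eq [IsAlgClosed K] {a : A}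
    (ha : algebraMap A K a ≠ 0) {r : K} (hr : IsIntegral A r) :
    ∃ w : K, a ^ p ^ (m + n) • aeval w (pPolynomial p m n c) = r ∧ IsIntegral A (a • w) := by
  have := (algebraMap A K).domain_nontrivial
  obtain ⟨w, hw⟩ := exists_aeval_pPolynomial_eq (p := p) m n c (r / algebraMap A K a ^ p ^ (m + n))
  have hwr : a ^ p ^ (m + n) • aeval w (pPolynomial p m n c) = r := by
    rw [hw, Algebra.smul_def, map_pow, mul_div_cancel₀ _ (pow_ne_zero _ ha)]
  refine ⟨w, hwr, isIntegral_of_aeval_pPolynomial (p := p) m n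
    (fun j => c j * a ^ (p ^ (m + n) - p ^ (m + j))) ?_⟩
  rwa [aeval_smul_pPolynomial, hwr]

variable [IsAlgClosed K] [CharP K p] {ι : Type*} {x : ι → A} {t : Finset ι}

/- With `a = ∏ i ∈ t, x i`, the element `y = u / a` satisfies
`h y = ∑ i ∈ t, (x i / a) ^ p ^ (m + n) * r i` for the polynomial `h` with coefficients `c`. Solving
`h (w i) = (x i / a) ^ p ^ (m + n) * r i` makes `y - ∑ i ∈ t, w i` a root of `h`, hence integral. -/
theorem exists_isIntegral_eq_smul_add_sum_of_aeval_pPolynomial_eq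
    (hx : ∀ i ∈ t, algebraMap A K (x i) ≠ 0) {u : K} {r : ι → K} (hr : ∀ i, IsIntegral A (r i))
    (hu : aeval u (pPolynomial p m n fun j =>
        c j * (∏ i ∈ t, x i) ^ (p ^ (m + n) - p ^ (m + j))) =
      ∑ i ∈ t, x i ^ p ^ (m + n) • r i) :
    ∃ (b : K) (d : ι → K), IsIntegral A b ∧ (∀ i, IsIntegral A (d i)) ∧
      (∏ i ∈ t, x i) • b + ∑ i ∈ t, x i • d i = u := by
  classical
  have := (algebraMap A K).domain_nontrivial
  set a := ∏ i ∈ t, x i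
  have hprod {i : ι} (hi : i ∈ t) : x i * ∏ j ∈ t.erase i, x j = a := Finset.mul_prod_erase t x hi
  have hne {s : Finset ι} (hs : s ⊆ t) : algebraMap A K (∏ i ∈ s, x i) ≠ 0 := by
    rw [map_prod]
    exact Finset.prod_ne_zero_iff.2 fun i hi => hx i (hs hi)
  have ha : algebraMap A K a ≠ 0 := hne subset_rfl
  choose w hw hwint using fun i => exists_isIntegral_smul_of_pow_smul_aeval_eq (p := p) m n c
    (hne (Finset.erase_subset i t)) (hr i)
  obtain ⟨y, rfl⟩ : ∃ y : K, a • y = u :=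
    ⟨u / algebraMap A K a, by rw [Algebra.smul_def, mul_div_cancel₀ _ ha]⟩
  have hyw : aeval y (pPolynomial p m n c) = ∑ i ∈ t, aeval (w i) (pPolynomial p m n c) := by
    have haw : a ^ p ^ (m + n) • aeval y (pPolynomial p m n c) =
        a ^ p ^ (m + n) • ∑ i ∈ t, aeval (w i) (pPolynomial p m n c) := by
      rw [← aeval_smul_pPolynomial, hu, Finset.smul_sum]
      refine Finset.sum_congr rfl fun i hi => ?_
      rw [← hw i, smul_smul, ← mul_pow, hprod hi]
    rw [Algebra.smul_def, Algebra.smul_def, map_pow] at haw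
    exact mul_left_cancel₀ (pow_ne_zero _ ha) haw
  refine ⟨y - ∑ i ∈ t, w i, fun i => (∏ j ∈ t.erase i, x j) • w i,
    isIntegral_of_aeval_pPolynomial (p := p) m n c ?_, hwint, ?_⟩
  · rw [aeval_sub_sum_pPolynomial, hyw, sub_self]
    exact isIntegral_zero
  · have hxw : ∑ i ∈ t, x i • (∏ j ∈ t.erase i, x j) • w i = a • ∑ i ∈ t, w i := by
      rw [Finset.smul_sum]
      exact Finset.sum_congr rfl fun i hi => by rw [smul_smul, hprod hi]
    rw [hxw, smul_sub, sub_add_cancel]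

theorem mem_span_image_smul_top_of_aeval_pPolynomial_mem (ht : t.Nonempty)
    (hx : ∀ i ∈ t, algebraMap A K (x i) ≠ 0) {u : integralClosure A K}
    (hu : aeval u (pPolynomial p m n fun j =>
        c j * (∏ i ∈ t, x i) ^ (p ^ (m + n) - p ^ (m + j))) ∈
      (Ideal.span ((fun i => x i ^ p ^ (m + n)) '' t) • ⊤ : Submodule A (integralClosure A K))) :
    u ∈ (Ideal.span (x '' t) • ⊤ : Submodule A (integralClosure A K)) := by
  obtain ⟨r, hr⟩ := mem_span_image_smul_top_iff.1 hu
  have hu' := congrArg (integralClosure A K).val hr.symm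
  rw [← aeval_algHom_apply, map_sum] at hu'
  obtain ⟨b, d, hb, hd, hbd⟩ := exists_isIntegral_eq_smul_add_sum_of_aeval_pPolynomial_eq m n c hx
    (fun i => (r i).2) hu'
  obtain ⟨i, hi⟩ := ht
  have ha : ∏ i ∈ t, x i ∈ Ideal.span (x '' t) :=
    Ideal.mem_of_dvd _ (Finset.dvd_prod_of_mem x hi) (Ideal.subset_span ⟨i, hi, rfl⟩)
  have hsum : (∏ i ∈ t, x i) • (⟨b, hb⟩ : integralClosure A K) +
      ∑ i ∈ t, x i • (⟨d i, hd i⟩ : integralClosure A K) = u :=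
    Subtype.ext (by simpa using hbd)
  rw [← hsum]
  exact add_mem (Submodule.smul_mem_smul ha trivial)
    (mem_span_image_smul_top_iff.2 ⟨fun i => ⟨d i, hd i⟩, rfl⟩)

end AdditivePolynomial

section FrobeniusPowers

open Polynomial (aeval)

theorem exists_sum_range_smul_eq {C M : Type*} [Semiring C] [AddCommMonoid M] [Module C M]
    [IsNoetherian C M] (v : ℕ → M) :
    ∃ (n : ℕ) (c : ℕ → C), ∑ j ∈ Finset.range n, c j • v j = v n := by
  let W : ℕ →o Submodule C M := ⟨fun n => Submodule.span C (v '' Finset.range n),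
    fun n k hnk => Submodule.span_mono (Set.image_mono (Finset.range_mono hnk))⟩
  obtain ⟨n, hn⟩ := monotone_stabilizes_iff_noetherian.2 ‹_› W
  have hv : v n ∈ W n := by
    rw [hn (n + 1) n.le_succ]
    exact Submodule.subset_span ⟨n, Finset.mem_coe.2 (Finset.self_mem_range_succ n), rfl⟩
  exact ⟨n, Submodule.mem_span_image_finset_iff_exists_fun' C |>.1 hv⟩

theorem prod_pow_sub_mul_mem_span_pow {C ι : Type*} [CommRing C] (x : ι → C) {t : Finset ι}
    {k q : ℕ} (hkq : k ≤ q) {a : C} (ha : a ∈ Ideal.span ((fun i => x i ^ k) '' t)) :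
    (∏ i ∈ t, x i) ^ (q - k) * a ∈ Ideal.span ((fun i => x i ^ q) '' t) := by
  classical
  rw [← Finset.prod_pow]
  refine prod_pow_sub_mul_mem_span (N := fun _ => k) x (fun _ _ => hkq) ?_
  rwa [Set.image_congr fun i hi => by rw [Finset.piecewise_eq_of_mem _ _ _ hi]]

variable {C : Type u} [CommRing C] [IsLocalRing C] [IsNoetherianRing C] {B : Type u} [CommRing B]
  [Algebra C B] [Algebra.IsIntegral C B] {p : ℕ} [Fact p.Prime] [CharP B p] {ι : Type*}
  [DecidableEq ι] {x : ι → C} {t : Finset ι} {i₀ : ι} {u : B}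

theorem exists_fg_forall_exists_prime_pow_sub_prod_smul_mem (hB : FlatOnPuncturedSpectrum C B)
    (hxm : ∀ i ∈ t, x i ∈ maximalIdeal C) (hxC : IsRegularFamily C x (insert i₀ t))
    (hxB : IsRegularFamily B x t) (hi₀ : i₀ ∉ t)
    (hu : x i₀ • u ∈ (Ideal.span (x '' t) • ⊤ : Submodule C B)) :
    ∃ (N : ι → ℕ) (S : Submodule C B), S.FG ∧ ∀ e : ℕ, (∀ i ∈ t, N i ≤ p ^ e) → ∃ v ∈ S,
      u ^ p ^ e - (∏ i ∈ t, x i ^ (p ^ e - N i)) • v ∈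
        (Ideal.span ((fun i => x i ^ p ^ e) '' t) • ⊤ : Submodule C B) := by
  obtain ⟨b, hb⟩ := mem_span_image_smul_top_iff.1 hu
  let S := Algebra.adjoin C (insert u (b '' t))
  have hS : (Subalgebra.toSubmodule S).FG := fg_adjoin_of_finite
    ((t.finite_toSet.image b).insert u) fun y _ => Algebra.IsIntegral.isIntegral y
  obtain ⟨N, S', hS', hdiv⟩ :=
    exists_fg_forall_pow_exists_sub_prod_smul_mem hB hxm hxC hxB hi₀ hS subset_rfl
  refine ⟨N, S', hS', fun e he => ?_⟩
  have huS : u ^ p ^ e ∈ S := pow_mem (Algebra.subset_adjoin (Set.mem_insert u _)) _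
  obtain ⟨v, hv, huv, -⟩ := hdiv (p ^ e) he (u ^ p ^ e) huS (by
    rw [← smul_pow, ← hb, sum_pow_char_pow]
    refine sum_mem fun i hi => ?_
    rw [smul_pow]
    have hbS : b i ^ p ^ e ∈ S :=
      pow_mem (Algebra.subset_adjoin (Set.mem_insert_of_mem u (Set.mem_image_of_mem b hi))) _
    exact Submodule.smul_mem_smul (Ideal.subset_span ⟨i, hi, rfl⟩) hbS)
  exact ⟨v, hv, huv⟩

/- A relation `v n = ∑ j < n, c j • v j` among the quotients `v e` of the Frobenius powers of `u`
turns into a relation among these powers themselves. -/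
theorem exists_aeval_pPolynomial_mem (hB : FlatOnPuncturedSpectrum C B)
    (hxm : ∀ i ∈ t, x i ∈ maximalIdeal C) (hxC : IsRegularFamily C x (insert i₀ t))
    (hxB : IsRegularFamily B x t) (hi₀ : i₀ ∉ t)
    (hu : x i₀ • u ∈ (Ideal.span (x '' t) • ⊤ : Submodule C B)) :
    ∃ (m n : ℕ) (c : ℕ → C), aeval u (pPolynomial p m n fun j =>
        c j * (∏ i ∈ t, x i) ^ (p ^ (m + n) - p ^ (m + j))) ∈
      (Ideal.span ((fun i => x i ^ p ^ (m + n)) '' t) • ⊤ : Submodule C B) := by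
  obtain ⟨N, S, hS, hdiv⟩ :=
    exists_fg_forall_exists_prime_pow_sub_prod_smul_mem (p := p) hB hxm hxC hxB hi₀ hu
  obtain ⟨m, hm⟩ : ∃ m, ∀ i ∈ t, N i ≤ p ^ m := ⟨t.sup N, fun i hi =>
    (Finset.le_sup hi).trans (Nat.lt_pow_self (Fact.out : p.Prime).one_lt).le⟩
  have hN (e : ℕ) : ∀ i ∈ t, N i ≤ p ^ (m + e) := fun i hi =>
    (hm i hi).trans (Nat.pow_le_pow_right (Fact.out : p.Prime).pos (Nat.le_add_right m e))
  choose v hvS hv using fun e => hdiv (m + e) (hN e)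
  have := isNoetherian_of_fg_of_noetherian S hS
  obtain ⟨n, c, hc⟩ := exists_sum_range_smul_eq (C := C) fun e => (⟨v e, hvS e⟩ : S)
  replace hc : ∑ j ∈ Finset.range n, c j • v j = v n := by
    simpa using congrArg Subtype.val hc
  refine ⟨m, n, c, ?_⟩
  have hle : ∀ j ∈ Finset.range n, p ^ (m + j) ≤ p ^ (m + n) := fun j hj =>
    prime_pow_le_prime_pow_of_lt m (Finset.mem_range.1 hj)
  let P (e : ℕ) : C := ∏ i ∈ t, x i ^ (p ^ (m + e) - N i)
  let a (j : ℕ) : C := (∏ i ∈ t, x i) ^ (p ^ (m + n) - p ^ (m + j))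
  have hlow : ∀ j ∈ Finset.range n, (c j * a j) • (u ^ p ^ (m + j) - P j • v j) ∈
      (Ideal.span ((fun i => x i ^ p ^ (m + n)) '' t) • ⊤ : Submodule C B) := fun j hj => by
    rw [mul_smul]
    exact Submodule.smul_mem _ _ (smul_mem_smul_top_of_forall_mul_mem
      (fun _ => prod_pow_sub_mul_mem_span_pow x (hle j hj)) (hv j))
  have hP : ∀ j ∈ Finset.range n, (c j * a j) • P j • v j = P n • c j • v j := fun j hj => by
    have haP : a j * P j = P n := by
      simp only [a, P, ← Finset.prod_pow, ← Finset.prod_mul_distrib, ← pow_add]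
      refine Finset.prod_congr rfl fun i hi => ?_
      rw [Nat.sub_add_sub_cancel (hle j hj) (hN j i hi)]
    rw [← haP, smul_smul, smul_smul, mul_assoc, mul_comm]
  rw [aeval_pPolynomial]
  convert sub_mem (hv n) (sum_mem hlow) using 1
  simp only [smul_sub, Finset.sum_sub_distrib, Finset.sum_congr rfl hP, ← Finset.smul_sum, hc]
  abel

theorem isRegularFamily_integralClosure {K : Type u} [Field K] [Algebra C K] [FaithfulSMul C K]
    [IsAlgClosed K] [CharP K p] {ι : Type*} {x : ι → C} {s : Finset ι} (hx : IsRegularFamily C x s)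
    (hxm : ∀ i ∈ s, x i ∈ maximalIdeal C)
    (hB : FlatOnPuncturedSpectrum C (integralClosure C K)) :
    IsRegularFamily (integralClosure C K) x s := by
  classical
  have hx0 : ∀ i ∈ s, algebraMap C K (x i) ≠ 0 := fun i hi h => by
    have hxi : x i = 0 := FaithfulSMul.algebraMap_injective C K (h.trans (map_zero _).symm)
    have h1 := hx.mem_of_smul_mem (Finset.empty_subset s) hi (Finset.notMem_empty i) (m := 1)
    simp [hxi] at h1
  induction s using Finset.strongInduction with | H s ih => ?_
  intro t hts i hi hit
  refine (isSMulRegular_quotient_iff_mem_of_smul_mem _ _).2 fun u hu => ?_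
  rcases t.eq_empty_or_nonempty with rfl | ht
  · have hu0 : x i • u = 0 := by simpa using hu
    have hu0' := congrArg Subtype.val hu0
    simpa [Algebra.smul_def, hx0 i hi] using hu0'
  · have htB : IsRegularFamily (integralClosure C K) x t :=
      ih t ⟨hts, fun h => hit (h hi)⟩ (hx.mono hts) (fun j hj => hxm j (hts hj))
        fun j hj => hx0 j (hts hj)
    have : CharP (integralClosure C K) p := CharP.subring K p (integralClosure C K).toSubring
    obtain ⟨m, n, c, hmem⟩ := exists_aeval_pPolynomial_mem (p := p) hB (fun j hj => hxm j (hts hj))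
      (hx.mono (Finset.insert_subset hi hts)) htB hit hu
    exact mem_span_image_smul_top_of_aeval_pPolynomial_mem m n c ht (fun j hj => hx0 j (hts hj))
      hmem

end FrobeniusPowers

section Localization

open Function

theorem IsSyzygy.restrictScalars {C C' : Type u} [CommRing C] [CommRing C'] [Algebra C C']
    [Module.Flat C C'] {k : ℕ} {X : Type u} [AddCommGroup X] [Module C' X] [Module C X]
    [IsScalarTower C C' X] (hX : IsSyzygy C' k X) : IsSyzygy C k X := by
  induction k generalizing X with
  | zero => trivial
  | succ k ih =>
    obtain ⟨L, _, _, Y, _, _, f, g, hL, hf, hfg, hg, hY⟩ := hX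
    let : Module C L := Module.compHom L (algebraMap C C')
    let : Module C Y := Module.compHom Y (algebraMap C C')
    have : IsScalarTower C C' L := .of_algebraMap_smul fun _ _ => rfl
    have : IsScalarTower C C' Y := .of_algebraMap_smul fun _ _ => rfl
    exact ⟨L, _, _, Y, _, _, f.restrictScalars C, g.restrictScalars C, Module.Flat.trans C C' L,
      hf, hfg, hg, ih hY⟩

theorem WeakDimLE.of_isLocalization {C C' : Type u} [CommRing C] [CommRing C'] [Algebra C C']
    (S : Submonoid C) [IsLocalization S C'] {D : ℕ} (h : WeakDimLE C D) : WeakDimLE C' D := by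
  intro X _ _ hX
  have : Module.Flat C C' := IsLocalization.flat C' S
  let : Module C X := Module.compHom X (algebraMap C C')
  have : IsScalarTower C C' X := .of_algebraMap_smul fun _ _ => rfl
  exact (Module.flat_iff_of_isLocalization C' S X).2 (h X hX.restrictScalars)

variable {C K : Type*} [CommRing C] [Field K] [Algebra C K]

theorem flat_localizedModule_integralClosure {C' : Type*} [CommRing C'] [Algebra C C']
    (S : Submonoid C) [IsLocalization S C'] [Algebra C' K] [IsScalarTower C C' K]
    [Module.Flat C' (integralClosure C' K)] :
    Module.Flat C (LocalizedModule S (integralClosure C K)) := by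
  let φ : integralClosure C K →ₐ[C] integralClosure C' K :=
    (integralClosure C K).val.codRestrict ((integralClosure C' K).restrictScalars C)
      fun y => IsIntegral.tower_top y.2
  let := φ.toAlgebra
  have : IsScalarTower (integralClosure C K) (integralClosure C' K) K := .of_algebraMap_eq' rfl
  have : IsLocalization (Algebra.algebraMapSubmonoid K S) K := .self <| by
    rintro _ ⟨s, hs, rfl⟩
    rw [IsScalarTower.algebraMap_apply C C' K]
    exact (IsLocalization.map_units C' ⟨s, hs⟩).map (algebraMap C' K)
  have : IsLocalizedModule S φ.toLinearMap :=
    isLocalizedModule_iff_isLocalization.2 (IsLocalization.integralClosure ..)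
  have : Module.Flat C C' := IsLocalization.flat C' S
  have : Module.Flat C (integralClosure C' K) := Module.Flat.trans C C' _
  exact Module.Flat.of_linearEquiv (IsLocalizedModule.iso S φ.toLinearMap)

theorem exists_algebra_of_isLocalization [FaithfulSMul C K] (S : Submonoid C)
    (hS : S ≤ nonZeroDivisors C) (C' : Type*) [CommRing C'] [Algebra C C'] [IsLocalization S C'] :
    ∃ _ : Algebra C' K, IsScalarTower C C' K ∧ FaithfulSMul C' K := by
  have hinj := FaithfulSMul.algebraMap_injective C K
  have := (algebraMap C K).domain_nontrivial
  have hunit (s : S) : IsUnit (algebraMap C K s) :=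
    .mk0 _ ((map_ne_zero_iff _ hinj).2 (nonZeroDivisors.ne_zero (hS s.2)))
  let : Algebra C' K := (IsLocalization.lift (M := S) hunit).toAlgebra
  refine ⟨_, .of_algebraMap_eq fun c => (IsLocalization.lift_eq hunit c).symm, ?_⟩
  refine (faithfulSMul_iff_algebraMap_injective C' K).2
    ((IsLocalization.lift_injective_iff hunit).2 fun a b => ?_)
  rw [hinj.eq_iff, (IsLocalization.injective C' hS).eq_iff]

end Localization

section FlatIntegralClosure

variable {C K : Type u} [CommRing C] [IsLocalRing C] [IsNoetherianRing C] [Field K] [IsAlgClosed K]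
  [Algebra C K] [FaithfulSMul C K] {D : ℕ}

theorem flat_integralClosure_of_flatOnPuncturedSpectrum (p : ℕ) [Fact p.Prime] [CharP K p]
    (hD : WeakDimLE C D) (hB : FlatOnPuncturedSpectrum C (integralClosure C K)) :
    Module.Flat C (integralClosure C K) := by
  obtain ⟨n, x, hxm, hx, f, hf⟩ := exists_isRegularFamily_injective_residueField C
  exact flat_of_flatOnPuncturedSpectrum_of_weakDimLE hD hx hf hB
    (isRegularFamily_integralClosure (p := p) hx (fun i _ => hxm i) hB)

theorem flat_integralClosure_of_height_lt (p : ℕ) [Fact p.Prime] [CharP K p]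
    (hD : WeakDimLE C D) {n : ℕ} (hn : (maximalIdeal C).height < n) :
    Module.Flat C (integralClosure C K) := by
  have := (FaithfulSMul.algebraMap_injective C K).isDomain (algebraMap C K)
  induction n generalizing C with
  | zero => simp at hn
  | succ n ih =>
    refine flat_integralClosure_of_flatOnPuncturedSpectrum p hD fun Q _ hQ => ?_
    have hS := Q.primeCompl_le_nonZeroDivisors
    obtain ⟨_, _, _⟩ := exists_algebra_of_isLocalization (K := K) Q.primeCompl hS
      (Localization.AtPrime Q)
    have hlt : Q.height < (maximalIdeal C).height := Ideal.height_strict_mono_of_isPrime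
      (lt_of_le_of_ne (le_maximalIdeal Ideal.IsPrime.ne_top') hQ)
    have hheight : (maximalIdeal (Localization.AtPrime Q)).height = Q.height := by
      have hdim := maximalIdeal_height_eq_ringKrullDim (R := Localization.AtPrime Q)
      rw [IsLocalization.AtPrime.ringKrullDim_eq_height Q (Localization.AtPrime Q)] at hdim
      exact_mod_cast hdim
    have := ih (hD.of_isLocalization (C' := Localization.AtPrime Q) Q.primeCompl)
      (hheight.trans_lt (hlt.trans_le (Order.le_of_lt_add_one hn)))
      (IsLocalization.isDomain_localization hS)
    exact flat_localizedModule_integralClosure (C' := Localization.AtPrime Q) Q.primeCompl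

theorem flat_integralClosure (p : ℕ) [Fact p.Prime] [CharP K p] (hD : WeakDimLE C D) :
    Module.Flat C (integralClosure C K) := by
  obtain ⟨n, hn⟩ := ENat.exists_nat_gt (Ideal.height_ne_top_of_isPrime (I := maximalIdeal C))
  exact flat_integralClosure_of_height_lt p hD hn

end FlatIntegralClosure

section PowerSeries

open MvPowerSeries (X coeff killCompl)

variable {ι k : Type*} [CommRing k]

theorem mem_span_X_image_of_coeff_eq_zero (t : Finset ι) {f : MvPowerSeries ι k}
    (hf : ∀ m : ι →₀ ℕ, (∀ i ∈ t, m i = 0) → coeff m f = 0) :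
    f ∈ Ideal.span (X '' t : Set (MvPowerSeries ι k)) := by
  classical
  induction t using Finset.induction_on generalizing f with
  | empty =>
    have : f = 0 := MvPowerSeries.ext fun m => by simpa using hf m (by simp)
    simp [this]
  | insert i t _ ih =>
    let g : MvPowerSeries ι k := fun m => if m i = 0 then coeff m f else 0
    have hg (m) : coeff m g = if m i = 0 then coeff m f else 0 := rfl
    have hgt : g ∈ Ideal.span (X '' t : Set (MvPowerSeries ι k)) := by
      refine ih fun m hm => ?_
      rw [hg, ite_eq_right_iff]
      exact fun hmi => hf m (Finset.forall_mem_insert _ _ _ |>.2 ⟨hmi, hm⟩)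
    have hfg : f - g ∈ Ideal.span {(X i : MvPowerSeries ι k)} := by
      rw [Ideal.mem_span_singleton, MvPowerSeries.X_dvd_iff]
      intro m hm
      rw [map_sub, hg, if_pos hm, sub_self]
    rw [span_image_insert, ← add_sub_cancel g f]
    exact Submodule.add_mem_sup hgt hfg

theorem ker_killCompl_subtype (t : Finset ι) :
    RingHom.ker (killCompl (R := k) (Function.Embedding.subtype (· ∉ t))) =
      Ideal.span (X '' (t : Set ι)) := by
  refine le_antisymm (fun f hf => mem_span_X_image_of_coeff_eq_zero t fun m hm => ?_) ?_
  · obtain ⟨m, rfl⟩ : m ∈ Set.range (Finsupp.embDomain (Function.Embedding.subtype (· ∉ t))) := by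
      rw [Finsupp.mem_range_embDomain_iff]
      intro i hi
      exact ⟨⟨i, fun hit => Finsupp.mem_support_iff.1 hi (hm i hit)⟩, rfl⟩
    rw [← MvPowerSeries.coeff_killCompl, RingHom.mem_ker.1 hf, map_zero]
  · rw [Ideal.span_le]
    rintro _ ⟨i, hi, rfl⟩
    refine MvPowerSeries.killCompl_X_eq_zero ?_
    simpa using hi

theorem X_notMem_span_X_image [Nontrivial k] {t : Finset ι} {i : ι} (hi : i ∉ t) :
    X i ∉ Ideal.span (X '' t : Set (MvPowerSeries ι k)) := by
  rw [← ker_killCompl_subtype, RingHom.mem_ker,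
    show i = Function.Embedding.subtype (· ∉ t) ⟨i, hi⟩ from rfl, MvPowerSeries.killCompl_X]
  intro h
  simpa using congrArg (coeff (Finsupp.single ⟨i, hi⟩ 1)) h

variable [IsDomain k]

theorem isPrime_span_X_image (t : Finset ι) :
    (Ideal.span (X '' (t : Set ι)) : Ideal (MvPowerSeries ι k)).IsPrime := by
  have : IsDomain (MvPowerSeries {i // i ∉ t} k) := NoZeroDivisors.to_isDomain _
  rw [← ker_killCompl_subtype]
  exact RingHom.ker_isPrime _

theorem isSMulRegular_quotient_of_notMem {A : Type*} [CommRing A] {P : Ideal A} [P.IsPrime] {a : A}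
    (ha : a ∉ P) : IsSMulRegular (A ⧸ P) a := by
  rw [isSMulRegular_quotient_iff_mem_of_smul_mem]
  exact fun b hb => (Ideal.IsPrime.mem_or_mem ‹_› hb).resolve_left ha

theorem isRegularFamily_X (s : Finset ι) :
    IsRegularFamily (MvPowerSeries ι k) (X : ι → MvPowerSeries ι k) s := by
  intro t _ i _ hit
  have := isPrime_span_X_image (k := k) t
  rw [smul_eq_mul, Ideal.mul_top]
  exact isSMulRegular_quotient_of_notMem (X_notMem_span_X_image hit)

theorem span_range_X_eq_maximalIdeal {k : Type*} [Field k] [Finite ι] :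
    Ideal.span (Set.range (X : ι → MvPowerSeries ι k)) = maximalIdeal (MvPowerSeries ι k) := by
  have := Fintype.ofFinite ι
  rw [← Set.image_univ, ← Finset.coe_univ]
  refine le_antisymm (le_maximalIdeal (isPrime_span_X_image _).ne_top) fun f hf => ?_
  refine mem_span_X_image_of_coeff_eq_zero _ fun m hm => ?_
  obtain rfl : m = 0 := Finsupp.ext fun i => hm i (Finset.mem_univ i)
  rw [mem_maximalIdeal, mem_nonunits_iff, MvPowerSeries.isUnit_iff_constantCoeff,
    isUnit_iff_ne_zero, not_not] at hf
  exact hf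

end PowerSeries

section Evaluation

open MvPowerSeries (X)

variable {ι k R : Type*} [Finite ι] [CommRing k] [CommRing R] [Algebra k R]

theorem truncTotal_coe_sub_mem_pow_idealOfVars (n : ℕ) (q : MvPolynomial ι k) :
    MvPowerSeries.truncTotal n (q : MvPowerSeries ι k) - q ∈ MvPolynomial.idealOfVars ι k ^ n := by
  rw [MvPolynomial.mem_pow_idealOfVars_iff']
  intro m hm
  rw [MvPolynomial.coeff_sub, sub_eq_zero, MvPowerSeries.coeff_truncTotal _ hm,
    MvPolynomial.coeff_coe]

theorem exists_algHom_mvPowerSeries (I : Ideal R) [IsAdicComplete I R] {z : ι → R}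
    (hz : ∀ i, z i ∈ I) : ∃ φ : MvPowerSeries ι k →ₐ[k] R, ∀ i, φ (X i) = z i := by
  let ev : MvPolynomial ι k →ₐ[k] R := MvPolynomial.aeval z
  have hev (n) : MvPolynomial.idealOfVars ι k ^ n ≤ (I ^ n).comap ev := by
    rw [← Ideal.map_le_iff_le_comap, Ideal.map_pow]
    refine Ideal.pow_right_mono ?_ n
    rw [MvPolynomial.idealOfVars, Ideal.map_span, Ideal.span_le]
    rintro _ ⟨_, ⟨i, rfl⟩, rfl⟩
    simpa [ev] using hz i
  let f (n : ℕ) : MvPowerSeries ι k →ₐ[k] R ⧸ I ^ n :=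
    (Ideal.quotientMapₐ (I ^ n) ev (hev n)).comp
      ((MvPowerSeries.truncTotalAlgHom ι k n).restrictScalars k)
  have hf {m n : ℕ} (hmn : m ≤ n) :
      (Ideal.Quotient.factorₐ k (Ideal.pow_le_pow_right hmn)).comp (f n) = f m := by
    ext q
    refine Ideal.Quotient.eq.2 ?_
    rw [← map_sub]
    exact hev m (MvPowerSeries.truncTotal_sub_truncTotal_mem_pow_idealOfVars hmn le_rfl q)
  refine ⟨IsAdicComplete.liftAlgHom I f hf, fun i => ?_⟩
  refine (IsHausdorff.eq_iff_smodEq (I := I)).2 fun n => ?_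
  rw [SModEq, smul_eq_mul, Ideal.mul_top]
  change Ideal.Quotient.mk (I ^ n) _ = Ideal.Quotient.mk (I ^ n) _
  rw [IsAdicComplete.mk_liftAlgHom, ← MvPolynomial.aeval_X (R := k) z i, ← MvPolynomial.coe_X]
  refine Ideal.Quotient.eq.2 ?_
  change ev _ - ev _ ∈ I ^ n
  rw [← map_sub]
  exact hev n (truncTotal_coe_sub_mem_pow_idealOfVars n _)

end Evaluation

section CoefficientField

open Polynomial

variable {k Q : Type*} [Field k] [CommRing Q] (p : ℕ) [hp : Fact p.Prime]

theorem isField_of_forall_pow_mem (π : Q →+* k) (hπ : Function.Surjective π)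
    (hker : ∀ a, π a = 0 → a ^ p = 0) [CharP Q p] {G : Subring Q} (hG : ∀ q, q ^ p ∈ G)
    (hinj : ∀ g ∈ G, π g = 0 → g = 0) : IsField G where
  exists_pair_ne := ⟨0, 1, fun h => zero_ne_one (α := k) <| by
    simpa using congrArg (fun g : G => π g) h⟩
  mul_comm := mul_comm
  mul_inv_cancel := by
    rintro ⟨g, hg⟩ hg0
    have hπg : π g ≠ 0 := fun h => hg0 (Subtype.ext (hinj g hg h))
    obtain ⟨q, hq⟩ := hπ (π g)⁻¹
    have hgq : (g * q) ^ p = 1 := by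
      have := hker (g * q - 1) (by
        rw [map_sub, map_mul, hq, map_one, mul_inv_cancel₀ hπg, sub_self])
      rwa [sub_pow_char, one_pow, sub_eq_zero] at this
    refine ⟨⟨g ^ (p - 1) * q ^ p, mul_mem (pow_mem hg _) (hG q)⟩, Subtype.ext ?_⟩
    change g * (g ^ (p - 1) * q ^ p) = 1
    rw [← mul_assoc, mul_pow_sub_one hp.out.ne_zero, ← mul_pow, hgq]

theorem exists_maximal_subring_forall_pow_mem [CharP Q p] (π : Q →+* k)
    (hker : ∀ a, π a = 0 → a ^ p = 0) :
    ∃ G : Subring Q, Maximal (fun G => (∀ q, q ^ p ∈ G) ∧ ∀ g ∈ G, π g = 0 → g = 0) G := by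
  let S : Set (Subring Q) := {G | (∀ q, q ^ p ∈ G) ∧ ∀ g ∈ G, π g = 0 → g = 0}
  have hfrob : (frobenius Q p).range ∈ S := by
    refine ⟨fun q => ⟨q, rfl⟩, ?_⟩
    rintro _ ⟨q, rfl⟩ hq
    rw [frobenius_def, map_pow] at hq
    exact hker q (eq_zero_of_pow_eq_zero hq)
  have hchain (c) (hc : c ⊆ S) (hcc : IsChain (· ≤ ·) c) (G) (hGc : G ∈ c) :
      ∃ H ∈ S, ∀ G ∈ c, G ≤ H := by
    refine ⟨sSup c, ⟨fun q => (le_sSup hGc : G ≤ _) ((hc hGc).1 q), fun g hg => ?_⟩,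
      fun _ => le_sSup⟩
    obtain ⟨H, hHc, hgH⟩ := (Subring.mem_sSup_of_directedOn ⟨G, hGc⟩ hcc.directedOn).1 hg
    exact (hc hHc).2 g hgH
  obtain ⟨G, -, hG⟩ := zorn_le_nonempty₀ S hchain _ hfrob
  exact ⟨G, hG⟩

variable [CharP k p]

theorem eq_zero_of_mem_adjoin_of_pow_mem_range {F : Type*} [Field F] [Algebra F Q] (π : Q →+* k)
    {q : Q} (hq : q ^ p ∈ Set.range (algebraMap F Q)) (hπq : ∀ c, π (algebraMap F Q c) ≠ π q) :
    ∀ a ∈ Algebra.adjoin F {q}, π a = 0 → a = 0 := by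
  obtain ⟨c, hc⟩ := hq
  have hirr : Irreducible (X ^ p - C c) := X_pow_sub_C_irreducible_of_prime hp.out fun b hb =>
    hπq b <| frobenius_inj k p <| by simp only [frobenius_def, ← map_pow, hb, hc]
  have : Fact (Irreducible (X ^ p - C c)) := ⟨hirr⟩
  let φ : AdjoinRoot (X ^ p - C c) →ₐ[F] Q := AdjoinRoot.liftAlgHom _ (Algebra.ofId F Q) q (by
    simp [hc])
  have hφ : Algebra.adjoin F {q} ≤ φ.range :=
    Algebra.adjoin_le (Set.singleton_subset_iff.2 ⟨.root _, by simp [φ]⟩)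
  intro a ha hπa
  obtain ⟨b, rfl⟩ := hφ ha
  have : b = 0 := (π.comp φ.toRingHom).injective (hπa.trans (map_zero _).symm)
  exact (congrArg φ this).trans (map_zero φ)

theorem exists_rightInverse_of_pow_ker_eq_zero [CharP Q p] (π : Q →+* k)
    (hπ : Function.Surjective π) (hker : ∀ a, π a = 0 → a ^ p = 0) :
    ∃ g : k →+* Q, π.comp g = RingHom.id k := by
  obtain ⟨G, ⟨hpow, hinj⟩, hmax⟩ := exists_maximal_subring_forall_pow_mem p π hker
  have hsurj (x : k) : ∃ g : G, π g = x := by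
    by_contra! hx
    obtain ⟨q, rfl⟩ := hπ x
    let _ : Field G := (isField_of_forall_pow_mem p π hπ hker hpow hinj).toField
    have hadj := eq_zero_of_mem_adjoin_of_pow_mem_range (F := G) p π ⟨⟨_, hpow q⟩, rfl⟩ hx
    have hle : G ≤ (Algebra.adjoin G {q}).toSubring :=
      fun g hg => (Algebra.adjoin G {q}).algebraMap_mem ⟨g, hg⟩
    have hq : q ∈ G := hmax ⟨fun t => hle (hpow t), hadj⟩ hle
      (Algebra.subset_adjoin rfl : q ∈ Algebra.adjoin G {q})
    exact hx ⟨q, hq⟩ rfl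
  let e : G ≃+* k := RingEquiv.ofBijective (π.comp G.subtype)
    ⟨(injective_iff_map_eq_zero _).2 fun g hg => Subtype.ext (hinj g g.2 hg), hsurj⟩
  exact ⟨G.subtype.comp e.symm, RingHom.ext e.apply_symm_apply⟩

variable (k) in
theorem formallySmooth_zmod [Algebra (ZMod p) k] : Algebra.FormallySmooth (ZMod p) k := by
  let f : MvPolynomial k (ZMod p) →ₐ[ZMod p] k := MvPolynomial.aeval id
  have hf : Function.Surjective f := fun x => ⟨MvPolynomial.X x, MvPolynomial.aeval_X _ _⟩
  have hsurj : Function.Surjective f.kerSquareLift :=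
    Ideal.Quotient.lift_surjective_of_surjective _ _ hf
  have := hsurj.nontrivial
  have : CharP (MvPolynomial k (ZMod p) ⧸ RingHom.ker f.toRingHom ^ 2) p :=
    charP_of_injective_algebraMap (algebraMap (ZMod p) _).injective p
  obtain ⟨g, hg⟩ := exists_rightInverse_of_pow_ker_eq_zero p f.kerSquareLift.toRingHom hsurj
    fun a ha => by
      have hsq : a ^ 2 ∈ RingHom.ker f.kerSquareLift.toRingHom ^ 2 := Ideal.pow_mem_pow ha 2
      rw [AlgHom.ker_kerSquareLift, Ideal.cotangentIdeal_square, Ideal.mem_bot] at hsq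
      exact pow_eq_zero_of_le hp.out.two_le hsq
  refine (Algebra.FormallySmooth.iff_split_surjection f hf).2
    ⟨{ g with commutes' := fun r => ?_ }, AlgHom.ext fun x => DFunLike.congr_fun hg x⟩
  exact DFunLike.congr_fun (RingHom.ext_zmod (g.comp (algebraMap (ZMod p) k)) (algebraMap _ _)) r

theorem exists_residue_rightInverse (R : Type*) [CommRing R] [IsLocalRing R]
    [IsAdicComplete (maximalIdeal R) R] [CharP R p] :
    ∃ g : ResidueField R →+* R, ∀ x, residue R (g x) = x := by
  let _ : Algebra (ZMod p) R := ZMod.algebra R p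
  have : CharP (ResidueField R) p :=
    charP_of_injective_algebraMap (algebraMap (ZMod p) (ResidueField R)).injective p
  have := formallySmooth_zmod (ResidueField R) p
  obtain ⟨g, hg⟩ := Algebra.FormallySmooth.exists_mkₐ_comp_eq_of_isAdicComplete
    (I := maximalIdeal R) (AlgHom.id (ZMod p) (ResidueField R))
  exact ⟨g, DFunLike.congr_fun hg⟩

end CoefficientField

section FiniteExtension

variable {A : Type*} [CommRing A]

theorem finite_of_isFiniteLength {R M : Type*} [CommRing R] [Algebra A R]
    (hR : ∀ m : Ideal R, m.IsMaximal → Module.Finite A (R ⧸ m)) [AddCommGroup M] [Module R M]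
    [hAM : Module A M] [IsScalarTower A R M] (hM : IsFiniteLength R M) : Module.Finite A M := by
  revert hAM
  induction hM with
  | of_subsingleton =>
    intros
    infer_instance
  | @of_simple_quotient M _ _ N hsimple _ ih =>
    intro _ _
    obtain ⟨m, hm, ⟨e⟩⟩ := isSimpleModule_iff_quot_maximal.1 hsimple
    have := hR m hm
    have : Module.Finite A (N.restrictScalars A) := ih
    have : Module.Finite A (M ⧸ N.restrictScalars A) :=
      Module.Finite.equiv (e.restrictScalars A).symm
    exact Module.Finite.of_submodule_quotient (N.restrictScalars A)

theorem isPrecomplete_pi {ι : Type*} [Finite ι] (I : Ideal A) (M : ι → Type*)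
    [∀ i, AddCommGroup (M i)] [∀ i, Module A (M i)] [∀ i, IsPrecomplete I (M i)] :
    IsPrecomplete I (∀ i, M i) := by
  classical
  have := Fintype.ofFinite ι
  refine AdicCompletion.of_surjective_iff.1 fun x => ?_
  choose v hv using fun i => AdicCompletion.of_surjective I (M i)
    (AdicCompletion.piEquivOfFintype I M x i)
  refine ⟨v, (AdicCompletion.piEquivOfFintype I M).injective (funext fun i => ?_)⟩
  rw [← hv i, AdicCompletion.piEquivOfFintype_apply]
  rfl

theorem finite_of_finite_quotient_smul_top (I : Ideal A) [IsPrecomplete I A] (M : Type*)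
    [AddCommGroup M] [Module A M] [IsHausdorff I M]
    [Module.Finite A (M ⧸ (I • ⊤ : Submodule A M))] : Module.Finite A M := by
  obtain ⟨n, f, hf⟩ := Module.Finite.exists_fin' A (M ⧸ (I • ⊤ : Submodule A M))
  obtain ⟨F, hF⟩ := Module.projective_lifting_property (I • ⊤ : Submodule A M).mkQ f
    (Submodule.mkQ_surjective _)
  have := isPrecomplete_pi I fun _ : Fin n => A
  exact Module.Finite.of_surjective F (surjective_of_mkQ_comp_surjective (I := I) (hF ▸ hf))

theorem finite_of_radical_map_eq_maximalIdeal {R : Type*} [CommRing R] [IsLocalRing R]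
    [IsNoetherianRing R] [Algebra A R] [Module.Finite A (ResidueField R)] (I : Ideal A)
    [IsPrecomplete I A] (hI : (I.map (algebraMap A R)).radical = maximalIdeal R) :
    Module.Finite A R := by
  have hle : I.map (algebraMap A R) ≤ maximalIdeal R := hI ▸ Ideal.le_radical
  have : IsHausdorff I R := .of_map hle
  have : IsArtinianRing (R ⧸ I.map (algebraMap A R)) := by
    refine quotient_artinian_of_mem_minimalPrimes_of_isLocalRing _ ?_
    rw [← Ideal.radical_minimalPrimes, hI, Ideal.minimalPrimes_eq_subsingleton_self]
    rfl
  have hlen : IsFiniteLength R (R ⧸ I.map (algebraMap A R)) := by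
    refine isFiniteLength_iff_isNoetherian_isArtinian.2 ⟨inferInstance, ?_⟩
    exact isArtinian_of_surjective_algebraMap (R := R ⧸ I.map (algebraMap A R))
      Ideal.Quotient.mk_surjective
  have := finite_of_isFiniteLength (A := A)
    (fun m hm => eq_maximalIdeal hm ▸ inferInstanceAs (Module.Finite A (ResidueField R))) hlen
  have : Module.Finite A (R ⧸ (I • ⊤ : Submodule A R)) := by
    rw [Ideal.smul_top_eq_map]
    exact this
  exact finite_of_finite_quotient_smul_top I R

variable {R : Type*} [CommRing R] [Algebra A R] [Algebra.IsIntegral A R]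

variable (A R) in
theorem ringKrullDim_le_of_isIntegral : ringKrullDim R ≤ ringKrullDim A :=
  Order.krullDim_le_of_strictMono (PrimeSpectrum.comap (algebraMap A R))
    fun _ _ => Ideal.IsIntegral.comap_lt_comap

theorem algebraMap_injective_of_ringKrullDim [IsDomain A] {d : ℕ} (hA : ringKrullDim A ≤ d)
    (hR : d ≤ ringKrullDim R) : Function.Injective (algebraMap A R) := by
  rw [injective_iff_map_eq_zero]
  intro a ha
  by_contra ha0
  have : Algebra.IsIntegral (algebraMap A R).range R :=
    ⟨RingHom.IsIntegral.tower_top (algebraMap A R).rangeRestrict _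
      (algebraMap_isIntegral_iff.2 ‹_›)⟩
  have hlt := ringKrullDim_succ_le_of_surjective (algebraMap A R).rangeRestrict
    (algebraMap A R).rangeRestrict_surjective (mem_nonZeroDivisors_of_ne_zero ha0)
    (Subtype.ext ha)
  have : (d + 1 : WithBot ℕ∞) ≤ d := calc
    (d + 1 : WithBot ℕ∞) ≤ ringKrullDim R + 1 := by gcongr
    _ ≤ ringKrullDim (algebraMap A R).range + 1 := by
      gcongr
      exact ringKrullDim_le_of_isIntegral _ _
    _ ≤ d := hlt.trans hA
  norm_cast at this
  omega

end FiniteExtension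

section Saturation

open Polynomial

theorem exists_forall_mul_pow_eq_zero_of_isAlgebraic {D S : Type*} [CommRing D] [IsDomain D]
    [CommRing S] [Algebra D S] [Module.IsTorsionFree D S] {y : S} (hy : IsAlgebraic D y) :
    ∃ n, ∀ N u, u * y ^ N = 0 → u * y ^ n = 0 := by
  obtain ⟨f, hf0, hfy⟩ := hy
  obtain ⟨g, hfg, hg⟩ := exists_eq_pow_rootMultiplicity_mul_and_not_dvd f hf0 0
  rw [map_zero, sub_zero] at hfg hg
  have hg0 : g.coeff 0 ≠ 0 := mt X_dvd_iff.2 hg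
  refine ⟨f.rootMultiplicity 0, fun N u hu => ?_⟩
  set v := u * y ^ f.rootMultiplicity 0
  have hvN : v * y ^ N = 0 := by
    rw [mul_right_comm, hu, zero_mul]
  have hgv : v * aeval y g = 0 := by
    rw [hfg, map_mul, map_pow, aeval_X] at hfy
    rw [mul_assoc, hfy, mul_zero]
  have hcv : g.coeff 0 • v = -aeval y g.divX * y * v := by
    rw [← g.divX_mul_X_add, map_add, map_mul, aeval_X, aeval_C, mul_add, ← Algebra.commutes,
      ← Algebra.smul_def] at hgv
    rw [neg_mul, neg_mul, mul_comm _ v]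
    exact eq_neg_of_add_eq_zero_right hgv
  have hpow (m : ℕ) : g.coeff 0 ^ m • v = (-aeval y g.divX * y) ^ m * v := by
    induction m with
    | zero => simp
    | succ m ih => rw [pow_succ, mul_smul, hcv, ← mul_smul_comm, ih, pow_succ', ← mul_assoc]
  refine (smul_eq_zero_iff_right (pow_ne_zero N hg0)).1 ?_
  rw [hpow, mul_pow, mul_assoc, mul_comm _ v, hvN, mul_zero]

variable {A B : Type*} [CommRing A] [CommRing B] [Algebra A B]

theorem isTorsionFree_quotient_map_of_flat [Module.Flat A B] (P : Ideal A) [P.IsPrime] :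
    Module.IsTorsionFree (A ⧸ P) (B ⧸ P.map (algebraMap A B)) := by
  refine ⟨fun a ha => ?_⟩
  obtain ⟨a, rfl⟩ := Ideal.Quotient.mk_surjective a
  have haP : a ∉ P := mt Ideal.Quotient.eq_zero_iff_mem.2 ha.ne_zero
  have hreg := isSMulRegular_quotient_smul_top_of_flat (M := B)
    (isSMulRegular_quotient_of_notMem haP)
  rw [Ideal.smul_top_eq_map] at hreg
  exact hreg

theorem exists_forall_mul_pow_mem_map [Module.Flat A B] [Algebra.IsIntegral A B] (P : Ideal A)
    [P.IsPrime] (y : B) : ∃ n, ∀ N u, u * y ^ N ∈ P.map (algebraMap A B) →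
      u * y ^ n ∈ P.map (algebraMap A B) := by
  have := isTorsionFree_quotient_map_of_flat (B := B) P
  have hy_int : IsIntegral (A ⧸ P) (Ideal.Quotient.mk (P.map (algebraMap A B)) y) :=
    ((Algebra.IsIntegral.isIntegral (R := A) y).map
      (Ideal.Quotient.mkₐ A (P.map (algebraMap A B)))).tower_top
  obtain ⟨n, hn⟩ := exists_forall_mul_pow_eq_zero_of_isAlgebraic hy_int.isAlgebraic
  refine ⟨n, fun N u hu => ?_⟩
  rw [← Ideal.Quotient.eq_zero_iff_mem, map_mul, map_pow] at hu ⊢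
  exact hn N _ hu

theorem exists_iSup_colon_span_pow_eq {J : Ideal B} {y : B} {n : ℕ}
    (h : ∀ N u, u * y ^ N ∈ J → u * y ^ n ∈ J) :
    ∃ N₀, 0 < N₀ ∧ ⨆ N : ℕ, J.colon (Ideal.span {y ^ N}) = J.colon (Ideal.span {y ^ N₀}) := by
  refine ⟨n + 1, n.succ_pos, le_antisymm (iSup_le fun N u hu => ?_) (le_iSup_of_le (n + 1) le_rfl)⟩
  rw [Ideal.mem_colon_span_singleton] at hu ⊢
  rw [pow_succ, ← mul_assoc]
  exact J.mul_mem_right y (h N u hu)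

end Saturation

section NoetherNormalization

open MvPowerSeries (X)

theorem ringKrullDim_mvPowerSeries_le (ι k : Type*) [Finite ι] [Field k] :
    ringKrullDim (MvPowerSeries ι k) ≤ Nat.card ι := by
  refine (ringKrullDim_le_spanFinrank_maximalIdeal _).trans (Nat.cast_le.2 ?_)
  rw [← span_range_X_eq_maximalIdeal]
  refine (Submodule.spanFinrank_span_le_ncard_of_finite (Set.finite_range _)).trans ?_
  rw [← Set.image_univ, ← Set.ncard_univ]
  exact Set.ncard_image_le

theorem exists_finite_injective_mvPowerSeries {R : Type*} [CommRing R] [IsNoetherianRing R]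
    [IsLocalRing R] [IsAdicComplete (maximalIdeal R) R] (p : ℕ) [Fact p.Prime] [CharP R p]
    {d : ℕ} {x : Fin d → R} (hdim : ringKrullDim R = d)
    (hx : (Ideal.span (Set.range x)).radical = maximalIdeal R) :
    ∃ φ : MvPowerSeries (Fin d) (ResidueField R) →+* R,
      (∀ i, φ (X i) = x i) ∧ φ.Finite ∧ Function.Injective φ := by
  obtain ⟨g, hg⟩ := exists_residue_rightInverse p R
  let _ : Algebra (ResidueField R) R := g.toAlgebra
  have hxm (i) : x i ∈ maximalIdeal R := hx ▸ Ideal.le_radical (Ideal.subset_span ⟨i, rfl⟩)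
  obtain ⟨φ, hφ⟩ := exists_algHom_mvPowerSeries (k := ResidueField R) (maximalIdeal R) hxm
  let A := MvPowerSeries (Fin d) (ResidueField R)
  let _ : Algebra A R := φ.toRingHom.toAlgebra
  let I : Ideal A := .span (.range X)
  have hmap : (I.map (algebraMap A R)).radical = maximalIdeal R := by
    rw [Ideal.map_span, ← Set.range_comp, ← hx]
    exact congrArg (fun z => (Ideal.span (Set.range z)).radical) (funext hφ)
  have hres : Function.Surjective (algebraMap A (ResidueField R)) := fun c =>
    ⟨algebraMap (ResidueField R) A c, (congrArg (residue R) (φ.commutes c)).trans (hg c)⟩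
  have : Module.Finite A (ResidueField R) := .of_surjective (Algebra.linearMap A _) hres
  have hfin : Module.Finite A R := finite_of_radical_map_eq_maximalIdeal I hmap
  have : IsDomain A := NoZeroDivisors.to_isDomain A
  have hA : ringKrullDim A ≤ d := by
    simpa using ringKrullDim_mvPowerSeries_le (Fin d) (ResidueField R)
  exact ⟨φ, hφ, hfin, algebraMap_injective_of_ringKrullDim hA hdim.ge⟩

end NoetherNormalization

section AbsoluteIntegralClosure

open MvPowerSeries (X)

theorem flat_integralClosure_of_isIntegral {A R K : Type u} [CommRing A] [IsNoetherianRing A]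
    [IsLocalRing A] [CommRing R] [Algebra A R] [Algebra.IsIntegral A R] [Field K] [IsAlgClosed K]
    [Algebra R K] [Algebra A K] [IsScalarTower A R K] [FaithfulSMul A K] (p : ℕ) [Fact p.Prime]
    [CharP K p] {D : ℕ} (hD : WeakDimLE A D) : Module.Flat A (integralClosure R K) := by
  have hmem (v : K) : v ∈ integralClosure R K ↔ v ∈ integralClosure A K :=
    ⟨fun h => isIntegral_trans (R := A) (A := R) v h, fun h => IsIntegral.tower_top (R := A) h⟩
  let e : integralClosure R K ≃ₗ[A] integralClosure A K :=
    { Equiv.subtypeEquivRight hmem with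
      map_add' := fun _ _ => rfl
      map_smul' := fun _ _ => rfl }
  have := flat_integralClosure (K := K) p hD
  exact Module.Flat.of_linearEquiv e

variable (R : Type) [CommRing R] [IsDomain R]

theorem flat_RPlus {A : Type} [CommRing A] [IsNoetherianRing A] [IsLocalRing A] [Algebra A R]
    [Algebra.IsIntegral A R] [FaithfulSMul A R] (p : ℕ) [Fact p.Prime] [CharP R p] {D : ℕ}
    (hD : WeakDimLE A D) : Module.Flat A (RPlus R) := by
  have : FaithfulSMul R (AlgebraicClosure (FractionRing R)) := .trans R (FractionRing R) _
  have : FaithfulSMul A (AlgebraicClosure (FractionRing R)) := .trans A R _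
  have : CharP (AlgebraicClosure (FractionRing R)) p :=
    charP_of_injective_algebraMap (FaithfulSMul.algebraMap_injective R _) p
  exact flat_integralClosure_of_isIntegral p hD

theorem stmt17_general [IsNoetherianRing R] [IsLocalRing R]
    [IsAdicComplete (maximalIdeal R) R] (p : ℕ) [Fact p.Prime] [CharP R p] {d : ℕ} {x : Fin d → R}
    (hx : IsSOP R x) (s : Set (Fin d)) (y : RPlus R) :
    ∃ N₀ : ℕ, 0 < N₀ ∧
      (⨆ N : ℕ, (Ideal.span (algebraMap R (RPlus R) '' (x '' s))).colon (Ideal.span {y ^ N})) =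
        (Ideal.span (algebraMap R (RPlus R) '' (x '' s))).colon (Ideal.span {y ^ N₀}) := by
  obtain ⟨φ, hφX, hφfin, hφinj⟩ := exists_finite_injective_mvPowerSeries p hx.1 hx.2
  let A := MvPowerSeries (Fin d) (ResidueField R)
  let _ : Algebra A R := φ.toAlgebra
  have : Module.Finite A R := hφfin
  have : FaithfulSMul A R := (faithfulSMul_iff_algebraMap_injective A R).2 hφinj
  have hflat : Module.Flat A (RPlus R) := flat_RPlus R p
    (weakDimLE_of_isRegularFamily (isRegularFamily_X _) span_range_X_eq_maximalIdeal)
  have : Algebra.IsIntegral A (RPlus R) := Algebra.IsIntegral.trans R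
  lift s to Finset (Fin d) using s.toFinite
  have := isPrime_span_X_image (k := ResidueField R) s
  have hmap : (Ideal.span (X '' s) : Ideal A).map (algebraMap A (RPlus R)) =
      Ideal.span (algebraMap R (RPlus R) '' (x '' s)) := by
    rw [IsScalarTower.algebraMap_eq A R, ← Ideal.map_map, Ideal.map_span, Ideal.map_span]
    simp only [Set.image_image, RingHom.algebraMap_toAlgebra, hφX]
  obtain ⟨n, hn⟩ := exists_forall_mul_pow_mem_map (Ideal.span (X '' s) : Ideal A) y
  exact exists_iSup_colon_span_pow_eq (hmap ▸ hn)

end AbsoluteIntegralClosure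

/-- For a `d`-dimensional complete local domain `R` of characteristic `p`,
the colon ideal `(x₁, …, xₙ)R⁺ : y^∞` stabilizes at a finite power for every `1 ≤ n ≤ d`. -/
theorem stmt17 (R : Type) [CommRing R] [IsDomain R] [IsNoetherianRing R] [IsLocalRing R]
    [IsAdicComplete (maximalIdeal R) R]
    (p : ℕ) [Fact p.Prime] [CharP R p]
    (d : ℕ) (x : Fin d → R) (hx : IsSOP R x)
    (n : ℕ) (hn1 : 1 ≤ n) (hnd : n ≤ d) (y : R) :
    ∃ N₀ : ℕ, 0 < N₀ ∧
      (⨆ N : ℕ, (Ideal.span (⇑(algebraMap R (RPlus R)) '' (x '' {i | (i : ℕ) < n}))).colon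
          (Ideal.span {algebraMap R (RPlus R) y ^ N})) =
        (Ideal.span (⇑(algebraMap R (RPlus R)) '' (x '' {i | (i : ℕ) < n}))).colon
          (Ideal.span {algebraMap R (RPlus R) y ^ N₀}) :=
  stmt17_general R p hx _ _
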